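/- arXiv:1001.0908 — 9 statements merged into one kernel-verified Lean document; each statement's English description precedes it below -/
import Mathlib

section
/- If 𝓜 is an infinite MAD family on ℕ, then ω* \ ⋃_{M∈𝓜} M* is nonempty; that is, there exists a free ultrafilter on ℕ that contains no member of 𝓜. -/
/-!
The sets covered, up to a finite set, by finitely many members of `𝓜` form an ideal containing
every member of `𝓜` and every finite set. The ideal is proper: if `T ⊆ 𝓜` is finite and `⋃₀ T` is
cofinite, then any `N ∈ 𝓜 \ T`, which exists since `𝓜` is infinite, is a finite set together with
the finitely many finite sets `N ∩ M`, `M ∈ T`, contradicting that `N` is infinite. An ultrafilter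
extending the dual filter is free and contains no member of `𝓜`.
-/

/-!
If 𝓜 is an infinite MAD family on ℕ, then there is a free ultrafilter on ℕ
containing no member of 𝓜; i.e. ω* \ ⋃_{M∈𝓜} M* ≠ ∅.
-/

/-- An ultrafilter on ℕ is free if it is not principal. -/
def FreeUF (U : Ultrafilter ℕ) : Prop := ∀ n : ℕ, U ≠ pure n

/-- `𝓜` is a MAD family on ℕ: an infinite-member almost disjoint family such
that every infinite subset of ℕ meets some member in an infinite set. -/
def IsMAD (𝓜 : Set (Set ℕ)) : Prop :=
  (∀ M ∈ 𝓜, M.Infinite) ∧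
  (∀ M ∈ 𝓜, ∀ N ∈ 𝓜, M ≠ N → (M ∩ N).Finite) ∧
  (∀ D : Set ℕ, D.Infinite → ∃ M ∈ 𝓜, (D ∩ M).Infinite)

/-- The filter dual to the ideal of sets that are covered, up to a finite set, by finitely many
members of `𝓜`. -/
def dualFilter (𝓜 : Set (Set ℕ)) : Filter ℕ :=
  Filter.comk (fun s => ∃ T : Set (Set ℕ), T ⊆ 𝓜 ∧ T.Finite ∧ (s \ ⋃₀ T).Finite)
    ⟨∅, by simp⟩
    (fun _ ⟨T, hT, hfin, h⟩ _ hst => ⟨T, hT, hfin, h.subset (Set.sdiff_subset_sdiff_left hst)⟩)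
    (fun s ⟨T, hT, hfin, h⟩ t ⟨T', hT', hfin', h'⟩ =>
      ⟨T ∪ T', Set.union_subset hT hT', hfin.union hfin', (h.union h').subset (by
        rw [Set.sUnion_union]
        rintro x ⟨hx | hx, hn⟩
        · exact Or.inl ⟨hx, fun h => hn (Or.inl h)⟩
        · exact Or.inr ⟨hx, fun h => hn (Or.inr h)⟩)⟩)

theorem dualFilter_neBot {𝓜 : Set (Set ℕ)} (hMAD : IsMAD 𝓜) (hinf : 𝓜.Infinite) :
    (dualFilter 𝓜).NeBot := by
  rw [Filter.neBot_iff, ne_eq, ← Filter.empty_mem_iff_bot, dualFilter, Filter.mem_comk]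
  rintro ⟨T, hT, hfin, h⟩
  obtain ⟨N, hN, hNT⟩ := (hinf.sdiff hfin).nonempty
  refine hMAD.1 N hN ((h.union (hfin.biUnion fun M hM =>
    hMAD.2.1 N hN M (hT hM) fun e => hNT (e ▸ hM))).subset fun x hx => ?_)
  by_cases hxT : x ∈ ⋃₀ T
  · obtain ⟨M, hM, hxM⟩ := hxT
    exact Or.inr (Set.mem_biUnion hM ⟨hx, hxM⟩)
  · exact Or.inl ⟨by simp, hxT⟩

theorem statement2 (𝓜 : Set (Set ℕ)) (hMAD : IsMAD 𝓜) (hinf : 𝓜.Infinite) :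
    ∃ U : Ultrafilter ℕ, FreeUF U ∧ ∀ M ∈ 𝓜, M ∉ U := by
  have := dualFilter_neBot hMAD hinf
  have hU := Ultrafilter.of_le (dualFilter 𝓜)
  refine ⟨Ultrafilter.of (dualFilter 𝓜), fun n hn => ?_, fun M hM => ?_⟩
  · have h : ({n}ᶜ : Set ℕ) ∈ Ultrafilter.of (dualFilter 𝓜) := hU <| by
      rw [dualFilter, Filter.mem_comk, compl_compl]
      exact ⟨∅, by simp⟩
    rw [hn] at h
    exact (Ultrafilter.mem_pure.1 h) rfl
  · refine Ultrafilter.compl_mem_iff_notMem.1 (hU ?_)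
    rw [dualFilter, Filter.mem_comk, compl_compl]
    exact ⟨{M}, by simpa using hM, by simp⟩
end

section
/- Let 𝓜 be an infinite MAD family on ℕ, let M ∈ 𝓜, and let y = y_M ∈ K₂. Then the collection {{y} ∪ j₂(M \ F) : F a finite subset of M}, where j₂(M \ F) denotes the set of j₂-images of the principal ultrafilters pure m for m ∈ M \ F, is a fundamental system of neighborhoods of y in K₂: each such set is an open neighborhood of y, and every neighborhood of y contains one of them. -/
/-- The relation ≈₂ on βω associated with the MAD family `𝓜`: two distinct
ultrafilters are identified iff both are free and either they share a member
of `𝓜` or neither contains a member of `𝓜`.  (For a MAD family this is an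
equivalence relation.) -/
def relK2 (𝓜 : Set (Set ℕ)) (x y : Ultrafilter ℕ) : Prop :=
  x = y ∨ (FreeUF x ∧ FreeUF y ∧
    ((∃ M ∈ 𝓜, M ∈ x ∧ M ∈ y) ∨ ((∀ M ∈ 𝓜, M ∉ x) ∧ (∀ M ∈ 𝓜, M ∉ y))))

/-- K₂ = βω/≈₂ with the quotient topology. -/
abbrev K2 (𝓜 : Set (Set ℕ)) : Type := Quot (relK2 𝓜)

/-- The natural quotient mapping j₂ : βω → K₂. -/
def j2 (𝓜 : Set (Set ℕ)) : Ultrafilter ℕ → K2 𝓜 := Quot.mk (relK2 𝓜)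

lemma FreeUF.notMem_of_finite {W : Ultrafilter ℕ} (hW : FreeUF W) {s : Set ℕ} (hs : s.Finite) :
    s ∉ W := by
  intro h
  obtain ⟨n, -, hn⟩ := Ultrafilter.eq_pure_of_finite_mem hs h
  exact hW n hn

lemma FreeUF.diff_mem {W : Ultrafilter ℕ} (hW : FreeUF W) {s F : Set ℕ} (hF : F.Finite)
    (hs : s ∈ W) : s \ F ∈ W :=
  Filter.inter_mem hs (Ultrafilter.compl_mem_iff_notMem.2 (hW.notMem_of_finite hF))

lemma relK2_symm {𝓜 : Set (Set ℕ)} {x y : Ultrafilter ℕ} (h : relK2 𝓜 x y) : relK2 𝓜 y x := by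
  rcases h with rfl | ⟨hx, hy, ⟨N, hN, hNx, hNy⟩ | ⟨h1, h2⟩⟩
  · exact Or.inl rfl
  · exact Or.inr ⟨hy, hx, Or.inl ⟨N, hN, hNy, hNx⟩⟩
  · exact Or.inr ⟨hy, hx, Or.inr ⟨h2, h1⟩⟩

/-- The set of ultrafilters containing `M \ F` is saturated for `≈₂`. -/
lemma mem_diff_of_relK2 {𝓜 : Set (Set ℕ)} (hMAD : IsMAD 𝓜) {M : Set ℕ} (hM : M ∈ 𝓜)
    {F : Set ℕ} (hF : F.Finite) {x y : Ultrafilter ℕ} (h : relK2 𝓜 x y) (hx : M \ F ∈ x) :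
    M \ F ∈ y := by
  have hMx : M ∈ x := Filter.mem_of_superset hx Set.sdiff_subset
  rcases h with rfl | ⟨hxf, hyf, ⟨N, hN, hNx, hNy⟩ | ⟨h1, -⟩⟩
  · exact hx
  · have hMN : M = N := by
      by_contra hne
      exact hxf.notMem_of_finite (hMAD.2.1 M hM N hN hne) (Filter.inter_mem hMx hNx)
    subst hMN
    exact hyf.diff_mem hF hNy
  · exact absurd hMx (h1 M hM)

lemma j2_eq_of_mem {𝓜 : Set (Set ℕ)} {M : Set ℕ} (hM : M ∈ 𝓜) {U W : Ultrafilter ℕ}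
    (hU : FreeUF U) (hMU : M ∈ U) (hW : FreeUF W) (hMW : M ∈ W) : j2 𝓜 W = j2 𝓜 U :=
  Quot.sound (Or.inr ⟨hW, hU, Or.inl ⟨M, hM, hMW, hMU⟩⟩)

lemma preimage_j2_basic {𝓜 : Set (Set ℕ)} (hMAD : IsMAD 𝓜) {M : Set ℕ} (hM : M ∈ 𝓜)
    {U : Ultrafilter ℕ} (hU : FreeUF U) (hMU : M ∈ U) {F : Set ℕ} (hF : F.Finite) :
    j2 𝓜 ⁻¹' (insert (j2 𝓜 U) ((fun n => j2 𝓜 (pure n)) '' (M \ F))) = {W | M \ F ∈ W} := by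
  -- By saturation, membership of `M \ F` descends to a predicate on the quotient.
  let P : K2 𝓜 → Prop := Quot.lift (fun W : Ultrafilter ℕ => M \ F ∈ W) fun x y h =>
    propext ⟨mem_diff_of_relK2 hMAD hM hF h, mem_diff_of_relK2 hMAD hM hF (relK2_symm h)⟩
  ext W
  constructor
  · rintro (h | ⟨n, hn, h⟩)
    · have hP : P (j2 𝓜 U) := hU.diff_mem hF hMU
      rw [← h] at hP
      exact hP
    · have hP : P (j2 𝓜 (pure n)) := Ultrafilter.mem_pure.2 hn
      have h' : j2 𝓜 (pure n) = j2 𝓜 W := h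
      rw [h'] at hP
      exact hP
  · intro hW
    have hW' : M \ F ∈ W := hW
    by_cases hfree : FreeUF W
    · exact Or.inl (j2_eq_of_mem hM hU hMU hfree (Filter.mem_of_superset hW' Set.sdiff_subset))
    · simp only [FreeUF, not_forall, not_not] at hfree
      obtain ⟨n, rfl⟩ := hfree
      exact Or.inr ⟨n, Ultrafilter.mem_pure.1 hW', rfl⟩

/-- An infinite set belongs to a free ultrafilter: extend the cofinite filter restricted to it. -/
lemma exists_freeUF_mem {s : Set ℕ} (hs : s.Infinite) : ∃ W : Ultrafilter ℕ, FreeUF W ∧ s ∈ W := by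
  have : (Filter.cofinite ⊓ Filter.principal s).NeBot :=
    Filter.cofinite_inf_principal_neBot_iff.2 hs
  have hle := Ultrafilter.of_le (Filter.cofinite ⊓ Filter.principal s)
  refine ⟨Ultrafilter.of (Filter.cofinite ⊓ Filter.principal s), ?_, ?_⟩
  · intro n hn
    rw [hn] at hle
    have h : ({n}ᶜ : Set ℕ) ∈ (pure n : Ultrafilter ℕ) :=
      (hle.trans inf_le_left) (Set.finite_singleton n).compl_mem_cofinite
    exact Ultrafilter.mem_pure.1 h rfl
  · exact (hle.trans inf_le_right) (Filter.mem_principal_self s)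

/-!
For `M ∈ 𝓜` and `y = y_M = j₂(M*)`, the sets `{y} ∪ j₂(M \ F)` (`F ⊆ M`
finite) form a fundamental system of neighborhoods of `y` in K₂.
Here `y_M` is represented as `j₂ U` for a free ultrafilter `U` with `M ∈ U`.
-/
theorem statement5 (𝓜 : Set (Set ℕ)) (hMAD : IsMAD 𝓜) (hinf : 𝓜.Infinite)
    (M : Set ℕ) (hM : M ∈ 𝓜)
    (U : Ultrafilter ℕ) (hUfree : FreeUF U) (hMU : M ∈ U) :
    (∀ F : Set ℕ, F.Finite → F ⊆ M →
      j2 𝓜 U ∈ insert (j2 𝓜 U) ((fun n => j2 𝓜 (pure n)) '' (M \ F)) ∧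
      IsOpen (insert (j2 𝓜 U) ((fun n => j2 𝓜 (pure n)) '' (M \ F)))) ∧
    (∀ V : Set (K2 𝓜), V ∈ nhds (j2 𝓜 U) →
      ∃ F : Set ℕ, F.Finite ∧ F ⊆ M ∧
        insert (j2 𝓜 U) ((fun n => j2 𝓜 (pure n)) '' (M \ F)) ⊆ V) := by
  refine ⟨fun F hF _ => ⟨Set.mem_insert _ _, ?_⟩, fun V hV => ?_⟩
  · have hq : Topology.IsQuotientMap (j2 𝓜) := isQuotientMap_quot_mk
    rw [← hq.isOpen_preimage, preimage_j2_basic hMAD hM hUfree hMU hF]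
    exact ultrafilter_isOpen_basic _
  · refine ⟨{m ∈ M | j2 𝓜 (pure m) ∉ V}, ?_, Set.sep_subset _ _, ?_⟩
    · by_contra hinfin
      obtain ⟨W, hWfree, hW⟩ := exists_freeUF_mem hinfin
      have hMW : M ∈ W := Filter.mem_of_superset hW (Set.sep_subset _ _)
      have hcont : Continuous (j2 𝓜) := continuous_quot_mk
      have hVW : V ∈ nhds (j2 𝓜 W) := by
        rwa [j2_eq_of_mem hM hUfree hMU hWfree hMW]
      have hev : {m | j2 𝓜 (pure m) ∈ V} ∈ W :=
        ((hcont.tendsto W).comp (Ultrafilter.tendsto_pure_self W)) hVW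
      obtain ⟨m, hm1, hm2⟩ := W.nonempty_of_mem (Filter.inter_mem hW hev)
      exact hm1.2 hm2
    · rintro _ (rfl | ⟨m, ⟨hm, hmF⟩, rfl⟩)
      · exact mem_of_mem_nhds hV
      · by_contra h
        exact hmF ⟨hm, h⟩
end

section
/- Let 𝓜 be an infinite MAD family on ℕ. Call elementary neighborhood of a point of level 0 any singleton {j₂(n)} with n ∈ ℕ, and elementary neighborhood of a point of level 1 any set of the form {y_M} ∪ j₂(M \ F) with M ∈ 𝓜 and F a finite subset of M. Then the sets K₂ \ ⋃_{x∈G} U_x, where G is a finite set and each U_x is an elementary neighborhood of a point of level 0 or 1, are clopen in K₂ and form a fundamental system of neighborhoods of the point x∞. -/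
/-- Elementary neighborhoods of points of level 0 and 1 in K₂: singletons
`{j₂(n)}` for `n ∈ ℕ`, and sets `{y_M} ∪ j₂(M \ F)` for `M ∈ 𝓜`, `F ⊆ M`
finite (where `y_M = j₂ V` for a free ultrafilter `V` containing `M`). -/
def ElemNbhd (𝓜 : Set (Set ℕ)) (W : Set (K2 𝓜)) : Prop :=
  (∃ n : ℕ, W = {j2 𝓜 (pure n)}) ∨
  (∃ M ∈ 𝓜, ∃ F : Set ℕ, F.Finite ∧ F ⊆ M ∧
    ∃ V : Ultrafilter ℕ, FreeUF V ∧ M ∈ V ∧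
      W = insert (j2 𝓜 V) ((fun n => j2 𝓜 (pure n)) '' (M \ F)))

lemma FreeUF.notMem_of_finite_s6 {x : Ultrafilter ℕ} (hx : FreeUF x) {F : Set ℕ} (hF : F.Finite) :
    F ∉ x := by
  intro h
  obtain ⟨n, -, hn⟩ := Ultrafilter.eq_pure_of_finite_mem hF h
  exact hx n hn

lemma FreeUF.diff_mem_iff {x : Ultrafilter ℕ} (hx : FreeUF x) {F : Set ℕ} (hF : F.Finite)
    (M : Set ℕ) : M \ F ∈ x ↔ M ∈ x := by
  rw [Ultrafilter.sdiff_mem_iff]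
  exact and_iff_left (hx.notMem_of_finite_s6 hF)

lemma IsMAD.eq_of_mem {𝓜 : Set (Set ℕ)} (hMAD : IsMAD 𝓜) {x : Ultrafilter ℕ} (hx : FreeUF x)
    {M N : Set ℕ} (hM : M ∈ 𝓜) (hN : N ∈ 𝓜) (hMx : M ∈ x) (hNx : N ∈ x) : M = N := by
  by_contra hne
  exact hx.notMem_of_finite_s6 (hMAD.2.1 M hM N hN hne) (Filter.inter_mem hMx hNx)

/-- Membership of `S` is well defined on `K₂` as soon as `≈₂` preserves it; this gives
information from an equality in `K₂` without transitivity of `≈₂`. -/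
lemma mem_iff_of_j2_eq {𝓜 : Set (Set ℕ)} {S : Set ℕ}
    (hS : ∀ x y, relK2 𝓜 x y → (S ∈ x ↔ S ∈ y)) {x y : Ultrafilter ℕ}
    (h : j2 𝓜 x = j2 𝓜 y) : S ∈ x ↔ S ∈ y :=
  iff_of_eq (congrArg (Quot.lift (fun u : Ultrafilter ℕ => S ∈ u)
    fun a b hab => propext (hS a b hab)) h)

lemma relK2_finite_mem_iff {𝓜 : Set (Set ℕ)} {F : Set ℕ} (hF : F.Finite) (x y : Ultrafilter ℕ)
    (h : relK2 𝓜 x y) : F ∈ x ↔ F ∈ y := by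
  rcases h with rfl | ⟨hx, hy, -⟩
  · rfl
  · exact iff_of_false (hx.notMem_of_finite_s6 hF) (hy.notMem_of_finite_s6 hF)

lemma relK2_diff_mem_iff {𝓜 : Set (Set ℕ)} (hMAD : IsMAD 𝓜) {M F : Set ℕ} (hM : M ∈ 𝓜)
    (hF : F.Finite) (x y : Ultrafilter ℕ) (h : relK2 𝓜 x y) : M \ F ∈ x ↔ M \ F ∈ y := by
  rcases h with rfl | ⟨hx, hy, ⟨N, hN, hNx, hNy⟩ | ⟨h₁, h₂⟩⟩
  · rfl
  · rw [hx.diff_mem_iff hF, hy.diff_mem_iff hF]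
    constructor
    · intro h
      rwa [hMAD.eq_of_mem hx hM hN h hNx]
    · intro h
      rwa [hMAD.eq_of_mem hy hM hN h hNy]
  · rw [hx.diff_mem_iff hF, hy.diff_mem_iff hF]
    exact iff_of_false (h₁ M hM) (h₂ M hM)

lemma j2_eq_pure_iff {𝓜 : Set (Set ℕ)} {x : Ultrafilter ℕ} {n : ℕ} :
    j2 𝓜 x = j2 𝓜 (pure n) ↔ {n} ∈ x := by
  constructor
  · intro h
    exact (mem_iff_of_j2_eq (relK2_finite_mem_iff (Set.finite_singleton n)) h).2
      (Ultrafilter.mem_pure.2 rfl)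
  · intro h
    obtain ⟨m, rfl, rfl⟩ := Ultrafilter.eq_pure_of_finite_mem (Set.finite_singleton n) h
    rfl

/-- The preimage in `βω` of an elementary neighborhood is a basic clopen set, given by a set of
naturals which belongs to no free ultrafilter missing all of `𝓜`. -/
lemma ElemNbhd.exists_preimage {𝓜 : Set (Set ℕ)} (hMAD : IsMAD 𝓜) {W : Set (K2 𝓜)}
    (hW : ElemNbhd 𝓜 W) :
    ∃ S : Set ℕ, (∀ x, j2 𝓜 x ∈ W ↔ S ∈ x) ∧
      ∀ x, FreeUF x → (∀ M ∈ 𝓜, M ∉ x) → S ∉ x := by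
  rcases hW with ⟨n, rfl⟩ | ⟨M, hM, F, hF, -, V, hV, hMV, rfl⟩
  · exact ⟨{n}, fun x => j2_eq_pure_iff,
      fun x hx _ => hx.notMem_of_finite_s6 (Set.finite_singleton n)⟩
  · refine ⟨M \ F, fun x => ⟨?_, fun h => ?_⟩,
      fun x hx hxM h => hxM M hM ((hx.diff_mem_iff hF M).1 h)⟩
    · rintro (h | ⟨n, hn, h⟩)
      · exact (mem_iff_of_j2_eq (relK2_diff_mem_iff hMAD hM hF) h).2
          ((hV.diff_mem_iff hF M).2 hMV)
      · exact Filter.mem_of_superset (j2_eq_pure_iff.1 h.symm) (Set.singleton_subset_iff.2 hn)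
    · by_cases hx : FreeUF x
      · exact Or.inl (Quot.sound
          (Or.inr ⟨hx, hV, Or.inl ⟨M, hM, (hx.diff_mem_iff hF M).1 h, hMV⟩⟩))
      · simp only [FreeUF, not_forall, not_not] at hx
        obtain ⟨n, rfl⟩ := hx
        exact Or.inr ⟨n, Ultrafilter.mem_pure.1 h, rfl⟩

lemma ElemNbhd.isClopen {𝓜 : Set (Set ℕ)} (hMAD : IsMAD 𝓜) {W : Set (K2 𝓜)}
    (hW : ElemNbhd 𝓜 W) : IsClopen W := by
  obtain ⟨S, hS, -⟩ := hW.exists_preimage hMAD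
  have hq : Topology.IsQuotientMap (j2 𝓜) := isQuotientMap_quot_mk
  have hpre : j2 𝓜 ⁻¹' W = {x | S ∈ x} := Set.ext hS
  constructor
  · rw [← hq.isClosed_preimage, hpre]
    exact ultrafilter_isClosed_basic S
  · rw [← hq.isOpen_preimage, hpre]
    exact ultrafilter_isOpen_basic S

/-!
The sets `K₂ \ ⋃_{x∈G} U_x`, for `G` finite and each `U_x` an elementary
neighborhood of a point of level 0 or 1, are clopen and form a fundamental
system of neighborhoods of `x∞ = j₂(ω* \ ⋃_{M∈𝓜} M*)`.  Here `x∞` is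
represented as `j₂ Uinf` for a free ultrafilter `Uinf` containing no member of 𝓜.
-/
theorem statement6 (𝓜 : Set (Set ℕ)) (hMAD : IsMAD 𝓜) (hinf : 𝓜.Infinite)
    (Uinf : Ultrafilter ℕ) (hfree : FreeUF Uinf) (hUinf : ∀ M ∈ 𝓜, M ∉ Uinf) :
    (∀ 𝒢 : Set (Set (K2 𝓜)), 𝒢.Finite → (∀ W ∈ 𝒢, ElemNbhd 𝓜 W) →
      IsClopen ((Set.univ : Set (K2 𝓜)) \ ⋃₀ 𝒢) ∧
      j2 𝓜 Uinf ∈ (Set.univ : Set (K2 𝓜)) \ ⋃₀ 𝒢) ∧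
    (∀ V : Set (K2 𝓜), V ∈ nhds (j2 𝓜 Uinf) →
      ∃ 𝒢 : Set (Set (K2 𝓜)), 𝒢.Finite ∧ (∀ W ∈ 𝒢, ElemNbhd 𝓜 W) ∧
        (Set.univ : Set (K2 𝓜)) \ ⋃₀ 𝒢 ⊆ V) := by
  constructor
  · intro 𝒢 hfin hG
    refine ⟨?_, Set.mem_univ _, ?_⟩
    · have hU : IsClopen (⋃₀ 𝒢) := by
        rw [Set.sUnion_eq_biUnion]
        exact hfin.isClopen_biUnion fun W hW => (hG W hW).isClopen hMAD
      exact isClopen_univ.diff hU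
    · rintro ⟨W, hW, hmem⟩
      obtain ⟨S, hS, hSx⟩ := (hG W hW).exists_preimage hMAD
      exact hSx Uinf hfree hUinf ((hS Uinf).1 hmem)
  · intro V hV
    obtain ⟨O, hOV, hO, hxO⟩ := mem_nhds_iff.1 hV
    have hcover : Oᶜ ⊆ ⋃₀ {W | ElemNbhd 𝓜 W} := by
      rintro ⟨x⟩ hx
      by_cases hfx : FreeUF x
      · by_cases hM : ∃ M ∈ 𝓜, M ∈ x
        · obtain ⟨M, hM, hMx⟩ := hM
          exact ⟨_, Or.inr ⟨M, hM, ∅, Set.finite_empty, Set.empty_subset M, x, hfx, hMx, rfl⟩,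
            Set.mem_insert _ _⟩
        · -- Such an `x` represents `x∞`, which lies in `O`.
          push Not at hM
          have hxx : j2 𝓜 x = j2 𝓜 Uinf :=
            Quot.sound (Or.inr ⟨hfx, hfree, Or.inr ⟨hM, hUinf⟩⟩)
          exact absurd (hxx ▸ hxO : j2 𝓜 x ∈ O) hx
      · simp only [FreeUF, not_forall, not_not] at hfx
        obtain ⟨n, rfl⟩ := hfx
        exact ⟨_, Or.inl ⟨n, rfl⟩, rfl⟩
    obtain ⟨𝒢, hsub, hfin, hcov⟩ := hO.isClosed_compl.isCompact.elim_finite_subcover_image (c := id)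
      (fun W hW => (ElemNbhd.isClopen hMAD hW).isOpen) (Set.sUnion_eq_biUnion ▸ hcover)
    refine ⟨𝒢, hfin, hsub, fun y hy => hOV (by_contra fun hyO => hy.2 ?_)⟩
    rw [Set.sUnion_eq_biUnion]
    exact hcov hyO
end

section
/- For every infinite MAD family 𝓜 on ℕ, the quotient space K₂ is compact and Hausdorff. -/
/-- `A` is saturated if `≈₂`-related ultrafilters either both contain `A` or both omit it. -/
def SatK2 (𝓜 : Set (Set ℕ)) (A : Set ℕ) : Prop :=
  ∀ x y : Ultrafilter ℕ, relK2 𝓜 x y → (A ∈ x ↔ A ∈ y)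

lemma FreeUF.not_mem_of_finite {x : Ultrafilter ℕ} (hx : FreeUF x) {s : Set ℕ}
    (hs : s.Finite) : s ∉ x := by
  intro h
  obtain ⟨n, -, hn⟩ := Ultrafilter.eq_pure_of_finite_mem hs h
  exact hx n hn

lemma satK2_singleton (𝓜 : Set (Set ℕ)) (n : ℕ) : SatK2 𝓜 {n} := by
  rintro x y (rfl | ⟨hx, hy, -⟩)
  · rfl
  · exact iff_of_false (hx.not_mem_of_finite (Set.finite_singleton n))
      (hy.not_mem_of_finite (Set.finite_singleton n))

lemma satK2_mem {𝓜 : Set (Set ℕ)} (had : ∀ M ∈ 𝓜, ∀ N ∈ 𝓜, M ≠ N → (M ∩ N).Finite)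
    {M : Set ℕ} (hM : M ∈ 𝓜) : SatK2 𝓜 M := by
  rintro x y (rfl | ⟨hx, hy, ⟨N, hN, hNx, hNy⟩ | ⟨h1, h2⟩⟩)
  · rfl
  · by_cases hMN : M = N
    · subst hMN
      exact iff_of_true hNx hNy
    · have hfin := had M hM N hN hMN
      exact iff_of_false (fun h => hx.not_mem_of_finite hfin (Filter.inter_mem h hNx))
        (fun h => hy.not_mem_of_finite hfin (Filter.inter_mem h hNy))
  · exact iff_of_false (h1 M hM) (h2 M hM)

/-- A saturated set containing exactly one of two points separates their images: the sets
`{U | A ∈ U}` and `{U | A ∉ U}` descend to disjoint open sets in the quotient. -/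
lemma SatK2.separated {𝓜 : Set (Set ℕ)} {A : Set ℕ} (hA : SatK2 𝓜 A) {x y : Ultrafilter ℕ}
    (hxy : ¬ (A ∈ x ↔ A ∈ y)) :
    ∃ u v : Set (K2 𝓜), IsOpen u ∧ IsOpen v ∧ j2 𝓜 x ∈ u ∧ j2 𝓜 y ∈ v ∧ Disjoint u v := by
  let u : Set (K2 𝓜) := {q | Quot.lift (fun z : Ultrafilter ℕ => A ∈ z)
    (fun a b h => propext (hA a b h)) q}
  have hu : IsOpen u := isOpen_coinduced.2 (ultrafilter_isOpen_basic A)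
  have hv : IsOpen uᶜ := isOpen_coinduced.2 (ultrafilter_isClosed_basic A).isOpen_compl
  have hmem : ∀ z, j2 𝓜 z ∈ u ↔ A ∈ z := fun _ => Iff.rfl
  by_cases hx : A ∈ x
  · exact ⟨u, uᶜ, hu, hv, (hmem x).2 hx, fun h => hxy (iff_of_true hx ((hmem y).1 h)),
      disjoint_compl_right⟩
  · have hy : A ∈ y := by tauto
    exact ⟨uᶜ, u, hv, hu, fun h => hx ((hmem x).1 h), (hmem y).2 hy, disjoint_compl_left⟩

/-- Singletons and members of `𝓜` separate inequivalent ultrafilters. -/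
lemma exists_satK2_of_not_rel {𝓜 : Set (Set ℕ)}
    (had : ∀ M ∈ 𝓜, ∀ N ∈ 𝓜, M ≠ N → (M ∩ N).Finite) {x y : Ultrafilter ℕ}
    (h : ¬ relK2 𝓜 x y) : ∃ A, SatK2 𝓜 A ∧ ¬ (A ∈ x ↔ A ∈ y) := by
  have hne : x ≠ y := fun e => h (Or.inl e)
  -- An ultrafilter containing `{n}` is `pure n`.
  have hpure : ∀ (z : Ultrafilter ℕ) (n : ℕ), {n} ∈ z → z = pure n := by
    intro z n hz
    obtain ⟨m, hm, e⟩ := Ultrafilter.eq_pure_of_finite_mem (Set.finite_singleton n) hz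
    rwa [Set.mem_singleton_iff.1 hm] at e
  have hself : ∀ n : ℕ, ({n} : Set ℕ) ∈ (pure n : Ultrafilter ℕ) := fun n =>
    Ultrafilter.mem_pure.2 rfl
  by_cases hx : FreeUF x
  · by_cases hy : FreeUF y
    · by_contra! hcon
      have key : ∀ M ∈ 𝓜, (M ∈ x ↔ M ∈ y) := fun M hM => hcon M (satK2_mem had hM)
      refine h (Or.inr ⟨hx, hy, ?_⟩)
      by_cases hex : ∃ M ∈ 𝓜, M ∈ x
      · obtain ⟨M, hM, hMx⟩ := hex
        exact Or.inl ⟨M, hM, hMx, (key M hM).1 hMx⟩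
      · push Not at hex
        exact Or.inr ⟨hex, fun M hM hMy => hex M hM ((key M hM).2 hMy)⟩
    · obtain ⟨n, rfl⟩ : ∃ n, y = pure n := by simpa [FreeUF] using hy
      exact ⟨{n}, satK2_singleton 𝓜 n, fun e => hne (hpure x n (e.2 (hself n)))⟩
  · obtain ⟨n, rfl⟩ : ∃ n, x = pure n := by simpa [FreeUF] using hx
    exact ⟨{n}, satK2_singleton 𝓜 n, fun e => hne (hpure y n (e.1 (hself n))).symm⟩

/-- For every infinite MAD family 𝓜 on ℕ, the quotient space K₂ is compact
and Hausdorff. -/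
theorem statement7 (𝓜 : Set (Set ℕ)) (hMAD : IsMAD 𝓜) (hinf : 𝓜.Infinite) :
    CompactSpace (K2 𝓜) ∧ T2Space (K2 𝓜) := by
  refine ⟨inferInstance, ⟨?_⟩⟩
  rintro ⟨x⟩ ⟨y⟩ hxy
  obtain ⟨A, hA, hsep⟩ := exists_satK2_of_not_rel hMAD.2.1 fun h => hxy (Quot.sound h)
  exact hA.separated hsep
end

section
/- Let 𝓜 be an infinite MAD family on ℕ. The point x∞ belongs to the closure in K₂ of the set j₂(ℕ) of images of principal ultrafilters, but no sequence of points of j₂(ℕ) converges to x∞; consequently seqClosure (j₂(ℕ)) ≠ closure (j₂(ℕ)), so K₂ has sequential order exactly 2. -/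
theorem FreeUF.finite_notMem {U : Ultrafilter ℕ} (hU : FreeUF U) {A : Set ℕ} (hA : A.Finite) :
    A ∉ U := by
  intro h
  obtain ⟨n, -, hn⟩ := Ultrafilter.eq_pure_of_finite_mem hA h
  exact hU n hn

/-- Finite sets are saturated for `≈₂`: distinct equivalent ultrafilters are free. -/
theorem relK2_finite_iff {𝓜 : Set (Set ℕ)} {A : Set ℕ} (hA : A.Finite) (x y : Ultrafilter ℕ)
    (h : relK2 𝓜 x y) : A ∈ x ↔ A ∈ y := by
  rcases h with rfl | ⟨hx, hy, -⟩
  · rfl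
  · exact iff_of_false (hx.finite_notMem hA) (hy.finite_notMem hA)

/-- Members of `𝓜` are saturated for `≈₂`: a free ultrafilter contains at most one of them. -/
theorem relK2_mem_iff {𝓜 : Set (Set ℕ)} (hMAD : IsMAD 𝓜) {M : Set ℕ} (hM : M ∈ 𝓜)
    (x y : Ultrafilter ℕ) (h : relK2 𝓜 x y) : M ∈ x ↔ M ∈ y := by
  rcases h with rfl | ⟨hx, hy, ⟨N, hN, hNx, hNy⟩ | ⟨h1, h2⟩⟩
  · rfl
  · by_cases hMN : M = N
    · subst hMN
      exact iff_of_true hNx hNy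
    · have hfin := hMAD.2.1 M hM N hN hMN
      exact iff_of_false (fun h => hx.finite_notMem hfin (Filter.inter_mem h hNx))
        (fun h => hy.finite_notMem hfin (Filter.inter_mem h hNy))
  · exact iff_of_false (h1 M hM) (h2 M hM)

/-- If `A` is saturated, the classes of ultrafilters omitting `A` form an open set, so a sequence
of principal classes converging to a class omitting `A` eventually leaves `A`. -/
theorem eventually_notMem_of_tendsto {𝓜 : Set (Set ℕ)} {A : Set ℕ}
    (hA : ∀ x y, relK2 𝓜 x y → (A ∈ x ↔ A ∈ y)) {U : Ultrafilter ℕ} (hU : A ∉ U) {f : ℕ → ℕ}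
    (hf : Filter.Tendsto (fun k => j2 𝓜 (pure (f k))) Filter.atTop (nhds (j2 𝓜 U))) :
    ∀ᶠ k in Filter.atTop, f k ∉ A := by
  let S : Set (K2 𝓜) :=
    {q | Quot.lift (fun V : Ultrafilter ℕ => A ∉ V)
      (fun x y h => propext (not_congr (hA x y h))) q}
  have hS : IsOpen S := by
    rw [← isQuotientMap_quot_mk.isOpen_preimage]
    have : Quot.mk (relK2 𝓜) ⁻¹' S = {V : Ultrafilter ℕ | Aᶜ ∈ V} := by
      ext V
      exact Ultrafilter.compl_mem_iff_notMem.symm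
    rw [this]
    exact ultrafilter_isOpen_basic _
  filter_upwards [hf.eventually (hS.mem_nhds (show j2 𝓜 U ∈ S from hU))] with k hk hkA
  exact hk (Ultrafilter.mem_pure.2 hkA)

/-!
`x∞` (represented as `j₂ Uinf` for a free ultrafilter `Uinf` containing no
member of 𝓜) lies in the closure of `j₂(ℕ)` (the set of images of principal
ultrafilters), but no sequence of points of `j₂(ℕ)` converges to `x∞`; hence
`seqClosure (j₂(ℕ)) ≠ closure (j₂(ℕ))`, so K₂ has sequential order exactly 2.
-/
theorem statement9 (𝓜 : Set (Set ℕ)) (hMAD : IsMAD 𝓜) (hinf : 𝓜.Infinite)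
    (Uinf : Ultrafilter ℕ) (hfree : FreeUF Uinf) (hUinf : ∀ M ∈ 𝓜, M ∉ Uinf) :
    j2 𝓜 Uinf ∈ closure (Set.range fun n : ℕ => j2 𝓜 (pure n)) ∧
    (∀ u : ℕ → K2 𝓜, (∀ k, u k ∈ Set.range fun n : ℕ => j2 𝓜 (pure n)) →
      ¬ Filter.Tendsto u Filter.atTop (nhds (j2 𝓜 Uinf))) ∧
    seqClosure (Set.range fun n : ℕ => j2 𝓜 (pure n)) ≠
      closure (Set.range fun n : ℕ => j2 𝓜 (pure n)) := by
  have hcl : j2 𝓜 Uinf ∈ closure (Set.range fun n : ℕ => j2 𝓜 (pure n)) := by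
    have hc : Continuous (j2 𝓜) := continuous_quot_mk
    have hd : Uinf ∈ closure (Set.range (pure : ℕ → Ultrafilter ℕ)) := denseRange_pure Uinf
    have h := image_closure_subset_closure_image hc (Set.mem_image_of_mem _ hd)
    rwa [← Set.range_comp] at h
  have hseq : ∀ u : ℕ → K2 𝓜, (∀ k, u k ∈ Set.range fun n : ℕ => j2 𝓜 (pure n)) →
      ¬ Filter.Tendsto u Filter.atTop (nhds (j2 𝓜 Uinf)) := by
    intro u hu hlim
    choose f hf using hu
    obtain rfl : (fun k => j2 𝓜 (pure (f k))) = u := funext hf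
    have hD : (Set.range f).Infinite := by
      intro hfin
      obtain ⟨k, hk⟩ := (eventually_notMem_of_tendsto (relK2_finite_iff hfin)
        (hfree.finite_notMem hfin) hlim).exists
      exact hk ⟨k, rfl⟩
    obtain ⟨M, hM, hDM⟩ := hMAD.2.2 _ hD
    obtain ⟨N, hN⟩ := Filter.eventually_atTop.1
      (eventually_notMem_of_tendsto (relK2_mem_iff hMAD hM) (hUinf M hM) hlim)
    refine hDM (((Set.finite_lt_nat N).image f).subset ?_)
    rintro _ ⟨⟨k, rfl⟩, hk⟩
    exact ⟨k, not_le.1 fun h => hN k h hk, rfl⟩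
  refine ⟨hcl, hseq, fun h => ?_⟩
  rw [← h] at hcl
  obtain ⟨u, hu, hlim⟩ := hcl
  exact hseq u hu hlim
end

section
/- The intersection of any countable family of open subsets of ω* is either empty or contains a nonempty open subset. More precisely: if (Aᵢ)_{i∈ℕ} is a family of open subsets of ω* whose intersection is nonempty, then there exists an infinite N ⊆ ℕ such that the nonempty clopen set N* is contained in ⋂_{i∈ℕ} Aᵢ. -/
/-- ω*, the subspace of βω = `Ultrafilter ℕ` consisting of the free
ultrafilters (the Čech–Stone remainder), with the subspace topology. -/
abbrev OmegaStar : Type := {U : Ultrafilter ℕ // FreeUF U}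

/-- `A* = {U ∈ ω* : A ∈ U}`, a clopen subset of ω*. -/
def ustar (A : Set ℕ) : Set OmegaStar := {U : OmegaStar | A ∈ U.1}

open Filter in
theorem freeUF_iff_le_cofinite (U : Ultrafilter ℕ) : FreeUF U ↔ (U : Filter ℕ) ≤ cofinite := by
  constructor
  · intro h
    rcases U.le_cofinite_or_eq_pure with h' | ⟨n, hn⟩
    · exact h'
    · exact absurd hn (h n)
  · rintro h n rfl
    have h1 : ({n}ᶜ : Set ℕ) ∈ (pure n : Ultrafilter ℕ) :=
      h (Set.finite_singleton n).compl_mem_cofinite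
    simp at h1

open Filter in
theorem ustar_nonempty {N : Set ℕ} (hN : N.Infinite) : (ustar N).Nonempty := by
  have : NeBot (cofinite ⊓ 𝓟 N) := hN.cofinite_inf_principal_neBot
  refine ⟨⟨Ultrafilter.of (cofinite ⊓ 𝓟 N), (freeUF_iff_le_cofinite _).2 ?_⟩, ?_⟩
  · exact (Ultrafilter.of_le _).trans inf_le_left
  · exact (Ultrafilter.of_le (cofinite ⊓ 𝓟 N)) (mem_inf_of_right (mem_principal_self N))

theorem exists_ustar_subset {O : Set OmegaStar} (hO : IsOpen O) {U : OmegaStar} (hU : U ∈ O) :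
    ∃ B ∈ U.1, ustar B ⊆ O := by
  obtain ⟨W, hW, rfl⟩ := isOpen_induced_iff.1 hO
  obtain ⟨_, ⟨B, rfl⟩, hB, hBW⟩ := ultrafilterBasis_is_basis.exists_subset_of_mem_open hU hW
  exact ⟨B, hB, fun V hV => hBW hV⟩

/-- Inclusion of `N*` in `B*` only requires almost inclusion of `N` in `B`. -/
theorem ustar_subset_of_finite_diff {N B : Set ℕ} (h : (N \ B).Finite) : ustar N ⊆ ustar B := by
  intro V hV
  have h1 : (N \ B)ᶜ ∈ (V.1 : Filter ℕ) :=
    (freeUF_iff_le_cofinite V.1).1 V.2 h.compl_mem_cofinite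
  refine Filter.mem_of_superset (Filter.inter_mem h1 hV) ?_
  rintro x ⟨h2, h3⟩
  by_contra h4
  exact h2 ⟨h3, h4⟩

open Filter in
/-- Countably many members of a free ultrafilter have an infinite pseudo-intersection. -/
theorem exists_pseudoIntersection {U : Ultrafilter ℕ} (hU : FreeUF U) {B : ℕ → Set ℕ}
    (hB : ∀ i, B i ∈ U) : ∃ N : Set ℕ, N.Infinite ∧ ∀ i, (N \ B i).Finite := by
  have hfreq : ∀ n, ∃ᶠ k in atTop, ∀ i ≤ n, k ∈ B i := by
    intro n
    have h1 : ∀ᶠ k in (U : Filter ℕ), ∀ i ≤ n, k ∈ B i :=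
      (eventually_all_finite (Set.finite_Iic n)).2 fun i _ => hB i
    rw [← Nat.cofinite_eq_atTop]
    exact h1.frequently.filter_mono ((freeUF_iff_le_cofinite U).1 hU)
  obtain ⟨φ, hφ, hφB⟩ := extraction_forall_of_frequently hfreq
  refine ⟨Set.range φ, Set.infinite_range_of_injective hφ.injective, fun i => ?_⟩
  refine ((Set.finite_Iio i).image φ).subset ?_
  rintro _ ⟨⟨n, rfl⟩, hn⟩
  exact ⟨n, not_le.1 fun hin => hn (hφB n i hin), rfl⟩

/-- If `(Aᵢ)` is a countable family of open subsets of ω* with nonempty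
intersection, then there is an infinite `N ⊆ ℕ` with the nonempty clopen set
`N*` contained in `⋂ᵢ Aᵢ`. -/
theorem statement12 (A : ℕ → Set OmegaStar) (hopen : ∀ i, IsOpen (A i))
    (hne : (⋂ i, A i).Nonempty) :
    ∃ N : Set ℕ, N.Infinite ∧ (ustar N).Nonempty ∧ ustar N ⊆ ⋂ i, A i := by
  obtain ⟨U, hU⟩ := hne
  rw [Set.mem_iInter] at hU
  choose B hBU hBA using fun i => exists_ustar_subset (hopen i) (hU i)
  obtain ⟨N, hN, hNB⟩ := exists_pseudoIntersection U.2 hBU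
  exact ⟨N, hN, ustar_nonempty hN,
    Set.subset_iInter fun i => (ustar_subset_of_finite_diff (hNB i)).trans (hBA i)⟩
end

section
/- Let (Nᵢ)_{i∈ℕ} be a countable family of infinite subsets of ℕ such that for every k ∈ ℕ the closure in ω* of ⋃_{i≤k} Nᵢ* is not all of ω*. Then there exists an infinite subset Δ ⊆ ℕ such that Δ* ∩ ⋃_{i∈ℕ} Nᵢ* = ∅. -/
theorem infinite_of_mem_freeUF {U : Ultrafilter ℕ} (hU : FreeUF U) {A : Set ℕ} (hA : A ∈ U) :
    A.Infinite := by
  intro hfin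
  obtain ⟨x, -, hx⟩ := Ultrafilter.eq_pure_of_finite_mem hfin hA
  exact hU x hx

/-- If `(Nᵢ)` is a countable family of infinite subsets of ℕ such that for
every `k` the closure in ω* of `⋃_{i≤k} Nᵢ*` is not all of ω*, then there is
an infinite `Δ ⊆ ℕ` with `Δ* ∩ ⋃ᵢ Nᵢ* = ∅`. -/
theorem statement13 (N : ℕ → Set ℕ) (hNinf : ∀ i, (N i).Infinite)
    (h : ∀ k : ℕ, closure (⋃ i ∈ Set.Iic k, ustar (N i)) ≠ Set.univ) :
    ∃ Δ : Set ℕ, Δ.Infinite ∧ ustar Δ ∩ ⋃ i, ustar (N i) = ∅ := by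
  have hC : ∀ k, (⋂ i ∈ Set.Iic k, (N i)ᶜ).Infinite := by
    intro k
    obtain ⟨U, hU⟩ : ∃ U, U ∉ ⋃ i ∈ Set.Iic k, ustar (N i) := by
      by_contra! hall
      exact h k (Set.univ_subset_iff.mp fun U _ => subset_closure (hall U))
    refine infinite_of_mem_freeUF U.2 ?_
    refine (Filter.biInter_mem (f := (U.1 : Filter ℕ)) (Set.finite_Iic k)).2 fun i hi => ?_
    refine Ultrafilter.compl_mem_iff_notMem.2 fun hmem => hU ?_
    exact Set.mem_biUnion hi hmem
  obtain ⟨φ, hφ, hφC⟩ := Filter.extraction_forall_of_frequently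
    fun k => Nat.frequently_atTop_iff_infinite.2 (hC k)
  refine ⟨Set.range φ, Set.infinite_range_of_injective hφ.injective, ?_⟩
  rw [Set.eq_empty_iff_forall_notMem]
  rintro U ⟨hΔ, hN⟩
  obtain ⟨i, hi⟩ := Set.mem_iUnion.1 hN
  refine infinite_of_mem_freeUF U.2 (Filter.inter_mem hΔ hi)
    (((Set.finite_Iio i).image φ).subset ?_)
  rintro _ ⟨⟨k, rfl⟩, hk⟩
  refine ⟨k, Set.mem_Iio.2 (lt_of_not_ge fun hik => ?_), rfl⟩
  exact Set.mem_iInter₂.1 (hφC k) i hik hk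
end

section
/- Assume the Continuum Hypothesis. For every n ∈ ℕ there exist a compact Hausdorff topological space X and a quotient map (a continuous surjection inducing the quotient topology) from βω onto X such that: (a) every sequentially closed subset of X is closed (X is sequential); (b) for every M ⊆ X, the closure of M equals the (n+1)-fold iterate seqClosure^[n+1] M; and (c) there exists M ⊆ X with seqClosure^[n] M ≠ closure M. (These are the finite-order instances of the theorem that for every ordinal α ≤ ω₁ there is a compact sequential Hausdorff quotient of βω of sequential order α.) -/
/-!
The space is scattered with finitely many levels, and the level (rank) of a point controls
sequential order. Suppose a compact Hausdorff space carries a rank function with values in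
`{0, …, N}` such that every point is the unique point of maximal rank in some clopen neighbourhood,
and every injective sequence of points of rank `k < N` has a subsequence converging to a point of
rank `k + 1` (`IsSeqRank`). Then a point of rank `r` in the closure of `M` lies in the `r`-fold
sequential closure of `M` (`IsSeqRank.mem_iterate`), whereas a limit of points of rank at most
`k < N` has rank at most `k + 1` (`IsSeqRank.rank_limit_le`). If moreover the points of rank `0` are
dense and there is a point of rank `N`, the sequential order is exactly `N`. If there are countably
many points of rank `0`, the space is also a quotient of `βω`, as a compact separable Hausdorff
space.

Such a space is encoded by a family of subsets of a countable set `E`, each with a rank, in which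
sets of equal rank are disjoint, and sets of different ranks are disjoint or nested, modulo the
ideal generated by the sets of smaller rank (`Good`). Each member of the family is a point of the
space, and its set is the trace on `E` of a clopen neighbourhood. The conditions persist when points are
added suitably and under increasing unions, so no inverse limit of spaces is needed. A countable good family
can be enlarged by one point so that a prescribed sequence of points of rank `k` gets a subsequence
converging to a point of rank `k + 1` (`Good.extend`). Under the Continuum Hypothesis all sequences
can be listed in order type `ω₁`, and a recursion starting from a countable tree of cylinders
treats every one of them at a stage at which the family is still countable (`exists_saturated`).
-/

namespace SeqOrder

open Set Filter Topology

/-! ### Sequential order of ranked compact spaces -/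

/-- A rank function on a topological space with values in `{0, …, N}`: every point has a clopen
neighbourhood in which it is the only point of maximal rank, and every injective sequence of points
of rank `k < N` has a subsequence converging to a point of rank `k + 1`. -/
structure IsSeqRank {X : Type*} [TopologicalSpace X] (N : ℕ) (rk : X → ℕ) : Prop where
  le : ∀ x, rk x ≤ N
  nhd : ∀ x, ∃ U : Set X, IsClopen U ∧ x ∈ U ∧ ∀ y ∈ U, y ≠ x → rk y < rk x
  lim : ∀ k < N, ∀ s : ℕ → X, Function.Injective s → (∀ i, rk (s i) = k) →
    ∃ x, rk x = k + 1 ∧ ∃ φ : ℕ → ℕ, StrictMono φ ∧ Tendsto (s ∘ φ) atTop (𝓝 x)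

variable {X : Type*} [TopologicalSpace X] {N : ℕ} {rk : X → ℕ}

/-- Descending through the ranks: if the points of `closure M` near `x` that have the largest rank
`j` below that of `x` are infinite in number, they accumulate at a point of rank `j + 1`, which can
only be `x`; if they are finite in number, a smaller neighbourhood of `x` avoids them. -/
theorem IsSeqRank.mem_iterate_aux (h : IsSeqRank N rk) {M : Set X} {x : X} {k : ℕ}
    (hx : rk x = k + 1) (hxM : x ∈ closure M)
    (ih : ∀ y, rk y = k → y ∈ closure M → y ∈ seqClosure^[k] M) (hnot : x ∉ M) :
    ∀ j ≤ k + 1, ∀ V : Set X, IsClopen V → x ∈ V →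
      (∀ y ∈ closure M ∩ V, y ≠ x → rk y < j) → x ∈ seqClosure^[k + 1] M := by
  intro j
  induction j with
  | zero =>
    intro _ V hV hxV hr
    obtain ⟨y, hyV, hyM⟩ := mem_closure_iff.1 hxM V hV.isOpen hxV
    have := hr y ⟨subset_closure hyM, hyV⟩ (by rintro rfl; exact hnot hyM)
    omega
  | succ j ihj =>
    intro hj V hV hxV hr
    by_cases hfin : {y | y ∈ closure M ∩ V ∧ rk y = j}.Finite
    · choose U hU hyU hUr using h.nhd
      refine ihj (by omega) (V \ ⋃ y ∈ {y | y ∈ closure M ∩ V ∧ rk y = j}, U y)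
        (hV.diff (hfin.isClopen_biUnion fun y _ => hU y)) ⟨hxV, ?_⟩ ?_
      · simp only [mem_iUnion, not_exists]
        intro y hy hxy
        by_cases e : x = y
        · subst e; have := hy.2; omega
        · have := hUr y x hxy e
          have := hy.2
          omega
      · rintro y ⟨hy, hyV, hyn⟩ hne
        have h1 := hr y ⟨hy, hyV⟩ hne
        rcases Nat.lt_succ_iff_lt_or_eq.1 h1 with h2 | h2
        · exact h2
        · exact absurd (mem_biUnion (show y ∈ {y | y ∈ closure M ∩ V ∧ rk y = j} from
            ⟨⟨hy, hyV⟩, h2⟩) (hyU y)) hyn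
    · have hinf : {y | y ∈ closure M ∩ V ∧ rk y = j}.Infinite := hfin
      let s := hinf.natEmbedding
      have hs : ∀ i, (s i : X) ∈ closure M ∩ V ∧ rk (s i) = j := fun i => (s i).2
      have hxN := h.le x
      obtain ⟨z, hz, φ, -, hlim⟩ := h.lim j (by omega) (fun i => (s i : X))
        (fun a b hab => s.injective (Subtype.ext hab)) (fun i => (hs i).2)
      have hzV : z ∈ closure M ∩ V :=
        (isClosed_closure.inter hV.isClosed).mem_of_tendsto hlim
          (Eventually.of_forall fun i => (hs _).1)
      have hzx : z = x := by
        by_contra hne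
        have := hr z hzV hne
        omega
      subst hzx
      have hjk : j = k := by omega
      subst hjk
      rw [Function.iterate_succ_apply']
      exact ⟨_, fun i => ih _ (hs _).2 (hs (φ i)).1.1, hlim⟩

theorem IsSeqRank.mem_iterate (h : IsSeqRank N rk) (M : Set X) :
    ∀ k x, rk x = k → x ∈ closure M → x ∈ seqClosure^[k] M := by
  intro k
  induction k with
  | zero =>
    intro x hx hxM
    obtain ⟨U, hU, hxU, hr⟩ := h.nhd x
    obtain ⟨y, hyU, hyM⟩ := mem_closure_iff.1 hxM U hU.isOpen hxU
    by_cases e : y = x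
    · exact e ▸ hyM
    · have := hr y hyU e
      omega
  | succ k ih =>
    intro x hx hxM
    by_cases hmem : x ∈ M
    · have : ∀ j, x ∈ seqClosure^[j] M := by
        intro j
        induction j with
        | zero => exact hmem
        | succ j ihj =>
          rw [Function.iterate_succ_apply']
          exact subset_seqClosure ihj
      exact this _
    obtain ⟨U, hU, hxU, hr⟩ := h.nhd x
    exact h.mem_iterate_aux hx hxM ih hmem (k + 1) le_rfl U hU hxU
      fun y hy hne => hx ▸ hr y hy.2 hne

theorem iterate_mono_nat (M : Set X) {a b : ℕ} (hab : a ≤ b) :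
    seqClosure^[a] M ⊆ seqClosure^[b] M := by
  induction hab with
  | refl => exact Subset.rfl
  | step _ ih =>
    rw [Function.iterate_succ_apply']
    exact ih.trans subset_seqClosure

theorem iterate_subset_closure (M : Set X) (k : ℕ) : seqClosure^[k] M ⊆ closure M := by
  induction k with
  | zero => exact subset_closure
  | succ k ih =>
    rw [Function.iterate_succ_apply']
    exact seqClosure_subset_closure.trans (closure_minimal ih isClosed_closure)

theorem IsSeqRank.closure_eq (h : IsSeqRank N rk) (M : Set X) :
    closure M = seqClosure^[N] M :=
  Subset.antisymm (fun x hx => iterate_mono_nat M (h.le x) (h.mem_iterate M _ x rfl hx))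
    (iterate_subset_closure M N)

theorem IsSeqRank.isClosed_of_isSeqClosed (h : IsSeqRank N rk) {S : Set X} (hS : IsSeqClosed S) :
    IsClosed S := by
  rw [← closure_eq_iff_isClosed, h.closure_eq S]
  exact Function.iterate_fixed hS.seqClosure_eq N

/-- A limit of points of rank at most `k < N` has rank at most `k + 1`. -/
theorem IsSeqRank.rank_limit_le [T2Space X] (h : IsSeqRank N rk) {k : ℕ} (hk : k < N)
    {s : ℕ → X} {x : X} (hs : ∀ i, rk (s i) ≤ k) (hlim : Tendsto s atTop (𝓝 x)) :
    rk x ≤ k + 1 := by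
  have hfreq : ∃ r ∈ Set.Iic k, ∃ᶠ i in atTop, rk (s i) = r := by
    by_contra! hcon
    have : ∀ᶠ i in atTop, ∀ r ∈ Set.Iic k, rk (s i) ≠ r :=
      ((Set.finite_Iic k).eventually_all).2 fun r hr => hcon r hr
    obtain ⟨i, hi⟩ := this.exists
    exact hi _ (hs i) rfl
  obtain ⟨r, hr, hfreq⟩ := hfreq
  have hr : r ≤ k := hr
  obtain ⟨φ, hφ, hφr⟩ := extraction_of_frequently_atTop hfreq
  have hlim' : Tendsto (s ∘ φ) atTop (𝓝 x) := hlim.comp hφ.tendsto_atTop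
  by_cases hfin : (range (s ∘ φ)).Finite
  · have : x ∈ range (s ∘ φ) :=
      hfin.isClosed.mem_of_tendsto hlim' (Eventually.of_forall fun i => mem_range_self i)
    obtain ⟨i, rfl⟩ := this
    have := hφr i
    simp only [Function.comp]
    omega
  · have hinf : (range (s ∘ φ)).Infinite := hfin
    let e := hinf.natEmbedding
    choose g hg using fun i => (e i).2
    have hginj : Function.Injective g := fun a b hab => e.injective (Subtype.ext (by
      rw [← hg a, ← hg b, hab]))
    obtain ⟨z, hz, ψ, hψ, hzlim⟩ := h.lim r (by omega) (fun i => s (φ (g i)))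
      (fun a b hab => e.injective (Subtype.ext (by rw [← hg a, ← hg b]; exact hab)))
      (fun i => hφr _)
    have : x = z := tendsto_nhds_unique
      (hlim'.comp (hginj.nat_tendsto_atTop.comp hψ.tendsto_atTop)) hzlim
    subst this
    omega

theorem IsSeqRank.iterate_ne [T2Space X] {n : ℕ} (h : IsSeqRank (n + 1) rk)
    (hd : Dense {x | rk x = 0}) {x : X} (hx : rk x = n + 1) :
    seqClosure^[n] {x | rk x = 0} ≠ closure {x | rk x = 0} := by
  have key : ∀ k ≤ n, ∀ y ∈ seqClosure^[k] {x | rk x = 0}, rk y ≤ k := by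
    intro k
    induction k with
    | zero => intro _ y hy; exact (show rk y = 0 from hy).le
    | succ k ih =>
      intro hk y hy
      rw [Function.iterate_succ_apply'] at hy
      obtain ⟨s, hs, hlim⟩ := hy
      exact h.rank_limit_le (by omega) (fun i => ih (by omega) _ (hs i)) hlim
  intro heq
  have := key n le_rfl x (heq ▸ hd x)
  omega


/-! ### Almost disjoint families of sets with ranks -/

/-- A candidate point: a rank together with a set, which is to be the trace on the isolated
points of a compact open neighbourhood. -/
abbrev Pt (E : Type) := ℕ × Set E

variable {E : Type}

/-- `Small F k S`: the set `S` is covered by finitely many members of `F` of rank below `k`. -/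
def Small (F : Set (Pt E)) (k : ℕ) (S : Set E) : Prop :=
  ∃ t : Set (Pt E), t.Finite ∧ t ⊆ F ∧ (∀ y ∈ t, y.1 < k) ∧ S ⊆ ⋃ y ∈ t, y.2

theorem Small.mono {F G : Set (Pt E)} {k l : ℕ} {S T : Set E} (h : Small F k S) (hFG : F ⊆ G)
    (hkl : k ≤ l) (hTS : T ⊆ S) : Small G l T := by
  obtain ⟨t, ht, htF, htk, hS⟩ := h
  exact ⟨t, ht, htF.trans hFG, fun y hy => (htk y hy).trans_le hkl, hTS.trans hS⟩

theorem Small.subset {F : Set (Pt E)} {k : ℕ} {S T : Set E} (h : Small F k S)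
    (hTS : T ⊆ S) : Small F k T := h.mono Subset.rfl le_rfl hTS

theorem small_empty {F : Set (Pt E)} {k : ℕ} : Small F k (∅ : Set E) :=
  ⟨∅, finite_empty, empty_subset _, by simp, empty_subset _⟩

theorem Small.union {F : Set (Pt E)} {k : ℕ} {S T : Set E} (h : Small F k S)
    (h' : Small F k T) : Small F k (S ∪ T) := by
  obtain ⟨t, ht, htF, htk, hS⟩ := h
  obtain ⟨t', ht', htF', htk', hS'⟩ := h'
  refine ⟨t ∪ t', ht.union ht', union_subset htF htF', ?_, ?_⟩
  · rintro y (hy | hy)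
    exacts [htk y hy, htk' y hy]
  · rw [biUnion_union]
    exact union_subset_union hS hS'

theorem small_biUnion {F : Set (Pt E)} {k : ℕ} {ι : Type*} {t : Set ι} (ht : t.Finite)
    {S : ι → Set E} (h : ∀ i ∈ t, Small F k (S i)) : Small F k (⋃ i ∈ t, S i) := by
  induction t, ht using Set.Finite.induction_on with
  | empty => simpa using small_empty
  | insert _ _ ih =>
    rw [biUnion_insert]
    exact (h _ (mem_insert _ _)).union (ih fun i hi => h i (mem_insert_of_mem _ hi))

theorem small_of_mem {F : Set (Pt E)} {k : ℕ} {y : Pt E} (hy : y ∈ F) (hk : y.1 < k) :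
    Small F k y.2 :=
  ⟨{y}, finite_singleton y, by simpa using hy, by simpa using hk, by simp⟩

/-- A good family of height `N`. The clause `sep` says that, modulo the ideal of sets covered by
finitely many sets of smaller rank, sets of equal rank are disjoint, and a set of smaller rank is
disjoint from or contained in one of larger rank. The clause `acc` says that below every member of
rank `k + 1` there are infinitely many members of rank `k`. The members of rank `0` are exactly the
singletons. -/
structure Good (N : ℕ) (F : Set (Pt E)) : Prop where
  sep : ∀ x ∈ F, ∀ y ∈ F, x ≠ y → x.1 ≤ y.1 →
    Small F x.1 (x.2 ∩ y.2) ∨ (x.1 < y.1 ∧ Small F x.1 (x.2 \ y.2))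
  acc : ∀ x ∈ F, x.1 ≠ 0 → {y | y ∈ F ∧ y.1 + 1 = x.1 ∧ Small F y.1 (y.2 \ x.2)}.Infinite
  zero : ∀ x ∈ F, x.1 = 0 → ∃ e, x.2 = {e}
  sing : ∀ e : E, ((0, {e}) : Pt E) ∈ F
  top : ((N, univ) : Pt E) ∈ F
  le : ∀ x ∈ F, x.1 ≤ N

namespace Good

variable {N : ℕ} {F : Set (Pt E)}

/-- If finitely many sets of smaller rank covered a member of rank `k + 1`, they would cover a
member of rank `k` that is almost disjoint from all of them. -/
theorem proper (h : Good N F) : ∀ x ∈ F, ¬ Small F x.1 x.2 := by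
  suffices ∀ k, ∀ x ∈ F, x.1 = k → ¬ Small F x.1 x.2 from fun x hx => this _ x hx rfl
  intro k
  induction k with
  | zero =>
    rintro x hx hk ⟨t, -, -, htk, hS⟩
    obtain ⟨e, he⟩ := h.zero x hx hk
    have : e ∈ x.2 := by simp [he]
    obtain ⟨y, hy, -⟩ := mem_iUnion₂.1 (hS this)
    have := htk y hy
    omega
  | succ k ih =>
    rintro x hx hk ⟨t, ht, htF, htk, hS⟩
    obtain ⟨y, ⟨hyF, hyk, hyx⟩, hyt⟩ := (h.acc x hx (by omega)).exists_notMem_finite ht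
    refine ih y hyF (by omega) ?_
    have hcov : Small F y.1 (⋃ z ∈ t, y.2 ∩ z.2) := by
      refine small_biUnion ht fun z hz => ?_
      have hzk := htk z hz
      rcases lt_or_eq_of_le (show z.1 ≤ y.1 by omega) with hlt | heq
      · exact (small_of_mem (htF hz) hlt).subset inter_subset_right
      · rcases h.sep y hyF z (htF hz) (by rintro rfl; exact hyt hz) heq.ge with h1 | h1
        · exact h1
        · omega
    refine (hyx.union hcov).subset fun e he => ?_
    by_cases hex : e ∈ x.2
    · obtain ⟨z, hz, hez⟩ := mem_iUnion₂.1 (hS hex)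
      exact Or.inr (mem_iUnion₂.2 ⟨z, hz, he, hez⟩)
    · exact Or.inl ⟨he, hex⟩

theorem not_both (h : Good N F) {x : Pt E} (hx : x ∈ F) {S : Set E}
    (h1 : Small F x.1 (x.2 \ S)) : ¬ Small F x.1 (x.2 ∩ S) := fun h2 =>
  h.proper x hx ((h1.union h2).subset (by rw [sdiff_union_inter]))

theorem meas (h : Good N F) {x y : Pt E} (hx : x ∈ F) (hy : y ∈ F) :
    Small F x.1 (x.2 ∩ y.2) ∨ Small F x.1 (x.2 \ y.2) := by
  by_cases e : x = y
  · subst e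
    exact Or.inr (by simpa using small_empty)
  rcases le_or_gt x.1 y.1 with hle | hlt
  · exact (h.sep x hx y hy e hle).imp_right And.right
  · exact Or.inl ((small_of_mem hy hlt).subset inter_subset_right)

/-- The points other than `y` in the clopen set given by `y` have smaller rank. -/
theorem lt_of_in (h : Good N F) {x y : Pt E} (hx : x ∈ F) (hy : y ∈ F)
    (hxy : Small F x.1 (x.2 \ y.2)) (hne : x ≠ y) : x.1 < y.1 := by
  by_contra! hle
  rcases lt_or_eq_of_le hle with hlt | heq
  · exact h.not_both hx hxy ((small_of_mem hy hlt).subset inter_subset_right)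
  · rcases h.sep x hx y hy hne heq.ge with h1 | h1
    · exact h.not_both hx hxy h1
    · omega

end Good

/-! ### Adding one point -/

/-- The member `y` of `F` decides the set `S` modulo sets of smaller rank. -/
def Meas (F : Set (Pt E)) (y : Pt E) (S : Set E) : Prop :=
  Small F y.1 (y.2 ∩ S) ∨ Small F y.1 (y.2 \ S)

theorem Meas.compl {F : Set (Pt E)} {y : Pt E} {S : Set E} (h : Meas F y S) : Meas F y Sᶜ := by
  rcases h with h | h
  · exact Or.inr (by rwa [sdiff_compl])
  · exact Or.inl (by rwa [← sdiff_eq])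

theorem Meas.inter {F : Set (Pt E)} {y : Pt E} {S T : Set E} (h : Meas F y S) (h' : Meas F y T) :
    Meas F y (S ∩ T) := by
  rcases h with h | h
  · exact Or.inl (h.subset (by grind))
  rcases h' with h' | h'
  · exact Or.inl (h'.subset (by grind))
  · exact Or.inr ((h.union h').subset (by grind))

theorem Meas.biInter {F : Set (Pt E)} {y : Pt E} {ι : Type*} {t : Set ι} (ht : t.Finite)
    {S : ι → Set E} (h : ∀ i ∈ t, Meas F y (S i)) : Meas F y (⋂ i ∈ t, S i) := by
  induction t, ht using Set.Finite.induction_on with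
  | empty => exact Or.inr (by simpa using small_empty)
  | insert _ _ ih =>
    rw [biInter_insert]
    exact (h _ (mem_insert _ _)).inter (ih fun i hi => h i (mem_insert_of_mem _ hi))

theorem Meas.biUnion {F : Set (Pt E)} {y : Pt E} {ι : Type*} {t : Set ι} (ht : t.Finite)
    {S : ι → Set E} (h : ∀ i ∈ t, Meas F y (S i)) : Meas F y (⋃ i ∈ t, S i) := by
  have := (Meas.biInter ht fun i hi => (h i hi).compl).compl
  simpa [compl_iInter] using this

/-- `Hits G k s`: some member of `G` of rank `k + 1` contains, modulo sets of rank below `k`,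
infinitely many terms of `s`. -/
def Hits (G : Set (Pt E)) (k : ℕ) (s : ℕ → Pt E) : Prop :=
  ∃ x ∈ G, x.1 = k + 1 ∧ {i | Small G k ((s i).2 \ x.2)}.Infinite

/-- The one-point extension: a countable good family can be enlarged so that a given injective
sequence of members of rank `k` has a subsequence converging to a member of rank `k + 1`. If no
old member of rank `k + 1` serves, pass to a subsequence that is eventually inside or eventually
outside each set of the family, and take as new set a union of shrunk terms of the subsequence,
the `i`-th term being cut down so that it respects the first `i + 1` of these decisions. -/
theorem Good.extend {N : ℕ} {F : Set (Pt E)} (h : Good N F) (hc : F.Countable) {k : ℕ}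
    (hk : k < N) {s : ℕ → Pt E} (hs : Function.Injective s) (hsF : ∀ i, s i ∈ F)
    (hsk : ∀ i, (s i).1 = k) : ∃ G, F ⊆ G ∧ G.Countable ∧ Good N G ∧ Hits G k s := by
  classical
  by_cases hF : Hits F k s
  · exact ⟨F, Subset.rfl, hc, h, hF⟩
  obtain ⟨y, rfl⟩ := hc.exists_eq_range ⟨_, h.top⟩
  set F := range y with hFdef
  have hy : ∀ j, y j ∈ F := fun j => mem_range_self j
  let U := hyperfilter ℕ
  let P : ℕ → Set ℕ := fun j => {i | Small F k ((s i).2 \ (y j).2)}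
  let Y : ℕ → Set E := fun j => if P j ∈ U then (y j).2 else (y j).2ᶜ
  have hQ : ∀ j, {i | Small F k ((s i).2 \ Y j)} ∈ U := by
    intro j
    by_cases hj : P j ∈ U
    · simp only [Y, if_pos hj]
      exact hj
    · simp only [Y, if_neg hj]
      refine mem_of_superset (Ultrafilter.compl_mem_iff_notMem.2 hj) fun i hi => ?_
      have := h.meas (hsF i) (hy j)
      rw [hsk] at this
      simpa [sdiff_compl] using this.resolve_right hi
  -- The new point avoids all old points of rank at most `k + 1`.
  have hlow : ∀ j, (y j).1 ≤ k + 1 → P j ∉ U := by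
    intro j hj
    refine notMem_hyperfilter_of_finite ?_
    rcases lt_or_eq_of_le hj with hlt | heq
    · refine Set.Subsingleton.finite ?_
      have key : ∀ i ∈ P j, s i = y j := by
        intro i hi
        by_contra hne
        have := h.lt_of_in (hsF i) (hy j) (by rw [hsk]; exact hi) hne
        rw [hsk] at this
        omega
      exact fun a ha b hb => hs ((key a ha).trans (key b hb).symm)
    · by_contra hinf
      exact hF ⟨y j, hy j, heq, hinf⟩
  obtain ⟨φ, hφ, hφQ⟩ := extraction_forall_of_frequently
    (P := fun n i => ∀ j ∈ Set.Iic n, Small F k ((s i).2 \ Y j)) (fun n => by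
      rw [Nat.frequently_atTop_iff_infinite]
      intro hfin
      refine notMem_hyperfilter_of_finite hfin ?_
      exact (eventually_all_finite (l := (U : Filter ℕ)) (Set.finite_Iic n)).2 fun j _ => hQ j)
  let B : ℕ → Set E := fun i => (s (φ i)).2 ∩ ⋂ j ∈ Set.Iic i, Y j
  let A : Set E := ⋃ i, B i
  have hB : ∀ i, Small F k ((s (φ i)).2 \ B i) := by
    intro i
    refine (small_biUnion (Set.finite_Iic i) (hφQ i)).subset ?_
    rintro e ⟨he, hne⟩
    by_contra hcon
    refine hne ⟨he, mem_iInter₂.2 fun j hj => ?_⟩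
    by_contra hej
    exact hcon (mem_iUnion₂.2 ⟨j, hj, he, hej⟩)
  have hBY : ∀ i j, j ≤ i → B i ⊆ Y j := fun i j hij e he => mem_iInter₂.1 he.2 j hij
  have hfinB : ∀ j, Small F (k + 1) (⋃ i ∈ Set.Iio j, B i) := fun j =>
    small_biUnion (Set.finite_Iio j) fun i _ =>
      (small_of_mem (hsF (φ i)) (by rw [hsk]; omega)).subset inter_subset_left
  have hAY : ∀ j, A \ Y j ⊆ ⋃ i ∈ Set.Iio j, B i := by
    rintro j e ⟨he, hne⟩
    obtain ⟨i, hi⟩ := mem_iUnion.1 he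
    refine mem_iUnion₂.2 ⟨i, ?_, hi⟩
    by_contra hij
    exact hne (hBY i j (not_lt.1 hij) hi)
  -- Old sets whose point is not a neighbour of the new point meet the new set in a small set.
  have hout : ∀ j, P j ∉ U → Small F (k + 1) (A ∩ (y j).2) := by
    intro j hj
    refine (hfinB j).subset (Subset.trans ?_ (hAY j))
    simp only [Y, if_neg hj, sdiff_compl, Subset.rfl]
  have hin : ∀ j, P j ∈ U → Small F (k + 1) (A \ (y j).2) := by
    intro j hj
    have := hAY j
    simp only [Y, if_pos hj] at this
    exact (hfinB j).subset this
  have hmeas : ∀ j, (y j).1 ≤ k → Meas F (y j) A := by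
    intro j hj
    have hY : ∀ l, Meas F (y j) (Y l) := by
      intro l
      have : Meas F (y j) (y l).2 := h.meas (hy j) (hy l)
      by_cases hl : P l ∈ U
      · simpa only [Y, if_pos hl] using this
      · simpa only [Y, if_neg hl] using this.compl
    have hm : Meas F (y j) (⋃ i ∈ Set.Iio j, B i) :=
      Meas.biUnion (Set.finite_Iio j) fun i _ =>
        Meas.inter (h.meas (hy j) (hsF _)) (Meas.biInter (Set.finite_Iic i) fun l _ => hY l)
    have hsub : (⋃ i ∈ Set.Iio j, B i) ⊆ A := iUnion₂_subset fun i _ => subset_iUnion B i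
    rcases hm with hm | hm
    · refine Or.inl (hm.subset fun e he => ⟨he.1, hAY j ⟨he.2, ?_⟩⟩)
      simp only [Y, if_neg (hlow j (by omega))]
      exact fun hn => hn he.1
    · exact Or.inr (hm.subset (sdiff_subset_sdiff_right hsub))
  have hFG : F ⊆ insert (k + 1, A) F := subset_insert _ _
  have hBG : ∀ i, Small (insert (k + 1, A) F) k ((s (φ i)).2 \ A) := fun i =>
    (hB i).mono hFG le_rfl (sdiff_subset_sdiff_right (subset_iUnion B i))
  refine ⟨insert (k + 1, A) F, hFG, (countable_range y).insert _, ?_, (k + 1, A),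
    mem_insert _ _, rfl, (infinite_range_of_injective hφ.injective).mono ?_⟩
  · refine ⟨?_, ?_, ?_, fun e => hFG (h.sing e), hFG h.top, ?_⟩
    · rintro x (rfl | hx) z (rfl | hz) hne hle
      · exact absurd rfl hne
      · obtain ⟨j, rfl⟩ := hz
        by_cases hj : P j ∈ U
        · have hjk : k + 1 < (y j).1 := by
            by_contra! hcon
            exact hlow j hcon hj
          exact Or.inr ⟨hjk, (hin j hj).mono hFG le_rfl Subset.rfl⟩
        · exact Or.inl ((hout j hj).mono hFG le_rfl Subset.rfl)
      · obtain ⟨j, rfl⟩ := hx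
        have hle : (y j).1 ≤ k + 1 := hle
        rcases lt_or_eq_of_le hle with hlt | heq
        · rcases hmeas j (by omega) with hm | hm
          · exact Or.inl (hm.mono hFG le_rfl Subset.rfl)
          · exact Or.inr ⟨hlt, hm.mono hFG le_rfl Subset.rfl⟩
        · refine Or.inl ((hout j (hlow j hle)).mono hFG heq.ge ?_)
          rw [inter_comm]
      · rcases h.sep x hx z hz hne hle with h1 | h1
        · exact Or.inl (h1.mono hFG le_rfl Subset.rfl)
        · exact Or.inr ⟨h1.1, h1.2.mono hFG le_rfl Subset.rfl⟩
    · rintro x (rfl | hx) hx0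
      · refine (infinite_range_of_injective (hs.comp hφ.injective)).mono ?_
        rintro _ ⟨i, rfl⟩
        refine ⟨hFG (hsF _), ?_, ?_⟩
        · simp [hsk]
        · simp only [Function.comp, hsk]
          exact hBG i
      · refine (h.acc x hx hx0).mono ?_
        rintro z ⟨hz, hzx, hzs⟩
        exact ⟨hFG hz, hzx, hzs.mono hFG le_rfl Subset.rfl⟩
    · rintro x (rfl | hx) hx0
      · exact absurd hx0 (by simp)
      · exact h.zero x hx hx0
    · rintro x (rfl | hx)
      · exact hk
      · exact h.le x hx
  · rintro _ ⟨i, rfl⟩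
    exact hBG i

/-! ### The recursion of length `ω₁` -/

theorem Hits.mono {F G : Set (Pt E)} {k : ℕ} {s : ℕ → Pt E} (h : Hits F k s) (hFG : F ⊆ G) :
    Hits G k s := by
  obtain ⟨x, hx, hxk, hinf⟩ := h
  exact ⟨x, hFG hx, hxk, hinf.mono fun i hi => Small.mono hi hFG le_rfl Subset.rfl⟩

theorem good_sUnion {N : ℕ} {C : Set (Set (Pt E))} (hne : C.Nonempty)
    (hdir : DirectedOn (· ⊆ ·) C) (hC : ∀ F ∈ C, Good N F) : Good N (⋃₀ C) := by
  obtain ⟨F₀, hF₀⟩ := hne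
  refine ⟨?_, ?_, ?_, fun e => ⟨F₀, hF₀, (hC _ hF₀).sing e⟩, ⟨F₀, hF₀, (hC _ hF₀).top⟩, ?_⟩
  · rintro x ⟨F, hF, hx⟩ y ⟨F', hF', hy⟩ hne hle
    obtain ⟨G, hG, h1, h2⟩ := hdir F hF F' hF'
    rcases (hC G hG).sep x (h1 hx) y (h2 hy) hne hle with h | h
    · exact Or.inl (h.mono (subset_sUnion_of_mem hG) le_rfl Subset.rfl)
    · exact Or.inr ⟨h.1, h.2.mono (subset_sUnion_of_mem hG) le_rfl Subset.rfl⟩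
  · rintro x ⟨F, hF, hx⟩ hx0
    refine ((hC F hF).acc x hx hx0).mono ?_
    rintro y ⟨hy, hyx, hys⟩
    exact ⟨⟨F, hF, hy⟩, hyx, hys.mono (subset_sUnion_of_mem hF) le_rfl Subset.rfl⟩
  · rintro x ⟨F, hF, hx⟩
    exact (hC F hF).zero x hx
  · rintro x ⟨F, hF, hx⟩
    exact (hC F hF).le x hx

/-- `G` is a countable good family enlarging `F` in which a subsequence of `s` converges to a point
whose rank is one more than that of `s 0`; only sequences of constant rank matter. -/
def Solves (N : ℕ) (F : Set (Pt E)) (s : ℕ → Pt E) (G : Set (Pt E)) : Prop :=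
  F ⊆ G ∧ G.Countable ∧ Good N G ∧ Hits G (s 0).1 s

open Classical in
/-- Enlarge `F` to a family that solves `s`, if there is one. -/
noncomputable def step (N : ℕ) (F : Set (Pt E)) (s : ℕ → Pt E) : Set (Pt E) :=
  if h : ∃ G, Solves N F s G then h.choose else F

theorem subset_step (N : ℕ) (F : Set (Pt E)) (s : ℕ → Pt E) : F ⊆ step N F s := by
  unfold step
  split_ifs with h
  · exact h.choose_spec.1
  · exact Subset.rfl

theorem step_good {N : ℕ} {F : Set (Pt E)} (s : ℕ → Pt E) (hF : Good N F) (hc : F.Countable) :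
    Good N (step N F s) ∧ (step N F s).Countable := by
  unfold step
  split_ifs with h
  · exact ⟨h.choose_spec.2.2.1, h.choose_spec.2.1⟩
  · exact ⟨hF, hc⟩

theorem step_hits {N : ℕ} {F : Set (Pt E)} {s : ℕ → Pt E} (h : ∃ G, Solves N F s G) :
    Hits (step N F s) (s 0).1 s := by
  unfold step
  rw [dif_pos h]
  exact h.choose_spec.2.2.2

/-- If the sequences can be enumerated along an uncountable well-order with countable initial
segments, and there is a countable good family to start from, then there is a good family in which
every injective sequence of points of rank `k < N` accumulates at a point of rank `k + 1`. -/
theorem exists_saturated {ι : Type} [LinearOrder ι] [WellFoundedLT ι]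
    (hseg : ∀ a : ι, (Set.Iio a).Countable) (hunc : ¬ (univ : Set ι).Countable)
    {σ : ι → ℕ → Pt E} (hσ : Function.Surjective σ) {N : ℕ} {F₀ : Set (Pt E)}
    (h₀ : Good N F₀) (hc₀ : F₀.Countable) :
    ∃ G, Good N G ∧ ∀ k < N, ∀ s : ℕ → Pt E, Function.Injective s → (∀ i, s i ∈ G) →
      (∀ i, (s i).1 = k) → Hits G k s := by
  obtain ⟨p, hp⟩ : ∃ p : ι → Set (Pt E),
      ∀ a, p a = step N (⋃₀ (insert F₀ (p '' Set.Iio a))) (σ a) := by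
    let f : ∀ a : ι, (∀ b, b < a → Set (Pt E)) → Set (Pt E) := fun a q =>
      step N (⋃₀ (insert F₀ {S | ∃ b, ∃ hb : b < a, q b hb = S})) (σ a)
    refine ⟨WellFoundedLT.fix f, fun a => ?_⟩
    rw [WellFoundedLT.fix_eq]
    simp only [f]
    congr 3
    ext S
    simp [Set.mem_image]
  have hsub : ∀ a, ⋃₀ (insert F₀ (p '' Set.Iio a)) ⊆ p a := fun a => by
    conv_rhs => rw [hp a]
    exact subset_step _ _ _
  have hsub₀ : ∀ a, F₀ ⊆ p a := fun a =>
    (subset_sUnion_of_mem (mem_insert _ _)).trans (hsub a)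
  have hmono : Monotone p := by
    intro b a hba
    rcases hba.lt_or_eq with hlt | rfl
    · have hb : b ∈ Set.Iio a := hlt
      exact Subset.trans (subset_sUnion_of_mem (mem_insert_of_mem _ (mem_image_of_mem p hb)))
        (hsub a)
    · exact le_rfl
  have hdir : ∀ T : Set ι, DirectedOn (· ⊆ ·) (insert F₀ (p '' T)) := by
    rintro T _ (rfl | ⟨a, ha, rfl⟩) _ (rfl | ⟨b, hb, rfl⟩)
    · exact ⟨_, mem_insert _ _, Subset.rfl, Subset.rfl⟩
    · exact ⟨p b, mem_insert_of_mem _ ⟨b, hb, rfl⟩, hsub₀ b, Subset.rfl⟩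
    · exact ⟨p a, mem_insert_of_mem _ ⟨a, ha, rfl⟩, Subset.rfl, hsub₀ a⟩
    · rcases le_total a b with hab | hab
      · exact ⟨p b, mem_insert_of_mem _ ⟨b, hb, rfl⟩, hmono hab, Subset.rfl⟩
      · exact ⟨p a, mem_insert_of_mem _ ⟨a, ha, rfl⟩, Subset.rfl, hmono hab⟩
  have hbelow : ∀ a, (∀ b < a, Good N (p b) ∧ (p b).Countable) →
      Good N (⋃₀ (insert F₀ (p '' Set.Iio a))) ∧
        (⋃₀ (insert F₀ (p '' Set.Iio a))).Countable := by
    intro a ih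
    constructor
    · refine good_sUnion (insert_nonempty _ _) (hdir _) ?_
      rintro _ (rfl | ⟨b, hb, rfl⟩)
      exacts [h₀, (ih b hb).1]
    · refine (((hseg a).image p).insert F₀).sUnion ?_
      rintro _ (rfl | ⟨b, hb, rfl⟩)
      exacts [hc₀, (ih b hb).2]
  have hgood : ∀ a, Good N (p a) ∧ (p a).Countable := by
    intro a
    induction a using WellFoundedLT.induction with
    | ind a ih =>
      rw [hp a]
      obtain ⟨h1, h2⟩ := hbelow a ih
      exact step_good _ h1 h2
  have hpG : ∀ a, p a ⊆ ⋃₀ (insert F₀ (p '' univ)) := fun a =>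
    subset_sUnion_of_mem (mem_insert_of_mem _ ⟨a, mem_univ a, rfl⟩)
  refine ⟨⋃₀ (insert F₀ (p '' univ)), ?_, ?_⟩
  · refine good_sUnion (insert_nonempty _ _) (hdir _) ?_
    rintro _ (rfl | ⟨b, -, rfl⟩)
    exacts [h₀, (hgood b).1]
  · intro k hk s hs hsG hsk
    obtain ⟨a, rfl⟩ := hσ s
    have hex : ∀ i, ∃ b, σ a i ∈ p b := by
      intro i
      obtain ⟨S, rfl | ⟨b, -, rfl⟩, hS⟩ := hsG i
      exacts [⟨a, hsub₀ a hS⟩, ⟨b, hS⟩]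
    choose b hb using hex
    -- The stages containing the terms of the sequence are bounded, since countable sets are.
    obtain ⟨c, hc⟩ : ∃ c, c ∉ Set.Iic a ∪ ⋃ i, Set.Iic (b i) := by
      by_contra! hcon
      have hIic : ∀ d : ι, (Set.Iic d).Countable := fun d => by
        rw [← Set.Iio_insert]
        exact (hseg d).insert d
      exact hunc (((hIic a).union (countable_iUnion fun i => hIic (b i))).mono fun d _ => hcon d)
    simp only [mem_union, mem_iUnion, Set.mem_Iic, not_or, not_exists, not_le] at hc
    obtain ⟨G, hcG, hGc, hG, hhit⟩ := (hgood c).1.extend (hgood c).2 hk hs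
      (fun i => hmono (hc.2 i).le (hb i)) hsk
    have : Hits (p a) (σ a 0).1 (σ a) := by
      rw [hp a]
      refine step_hits ⟨G, ?_, hGc, hG, by rwa [hsk]⟩
      exact (hsub a).trans ((hmono hc.1.le).trans hcG)
    rw [hsk] at this
    exact this.mono (hpG a)

/-! ### The initial family -/

/-- The set of functions that agree with `e` on all but the last `k` coordinates. -/
def cyl {N : ℕ} (k : ℕ) (e : Fin N → ℕ) : Set (Fin N → ℕ) :=
  {f | ∀ i : Fin N, (i : ℕ) + k < N → f i = e i}

/-- The tree of cylinders in `ℕ ^ N`, the rank being the number of free coordinates. The associated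
space is the ordinal `ω ^ N + 1`. -/
def initial (N : ℕ) : Set (Pt (Fin N → ℕ)) :=
  {x | ∃ k ≤ N, ∃ e : Fin N → ℕ, x = (k, cyl k e)}

theorem cyl_zero {N : ℕ} (e : Fin N → ℕ) : cyl 0 e = {e} := by
  ext f
  simp only [cyl, mem_ofPred_eq, mem_singleton_iff, add_zero]
  exact ⟨fun h => funext fun i => h i i.2, fun h i _ => h ▸ rfl⟩

theorem initial_good (N : ℕ) : Good N (initial N) := by
  refine ⟨?_, ?_, ?_, ?_, ?_, ?_⟩
  · rintro _ ⟨k, hk, e, rfl⟩ _ ⟨l, hl, f, rfl⟩ hne hle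
    have hle : k ≤ l := hle
    by_cases he : e ∈ cyl l f
    · rcases lt_or_eq_of_le hle with hlt | rfl
      · refine Or.inr ⟨hlt, small_empty.subset ?_⟩
        rintro g ⟨hg, hgn⟩
        exact hgn fun i hi => (hg i (by omega)).trans (he i hi)
      · refine absurd ?_ hne
        congr 1
        ext g
        exact ⟨fun hg i hi => (hg i hi).trans (he i hi),
          fun hg i hi => (hg i hi).trans (he i hi).symm⟩
    · refine Or.inl (small_empty.subset ?_)
      rintro g ⟨hg, hg'⟩
      exact he fun i hi => (hg i (by omega)).symm.trans (hg' i hi)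
  · rintro _ ⟨k, hk, e, rfl⟩ hk0
    obtain ⟨k, rfl⟩ := Nat.exists_eq_succ_of_ne_zero hk0
    have hk : k + 1 ≤ N := hk
    -- Children are obtained by fixing one more coordinate.
    let c : Fin N := ⟨N - (k + 1), by omega⟩
    have hinj : Function.Injective
        (fun m : ℕ => ((k, cyl k (Function.update e c m)) : Pt (Fin N → ℕ))) := by
      intro m m' hmm
      have h1 : cyl k (Function.update e c m) = cyl k (Function.update e c m') :=
        congrArg Prod.snd hmm
      have h2 : Function.update e c m ∈ cyl k (Function.update e c m') :=
        h1 ▸ fun i _ => rfl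
      have h3 := h2 c (by simp only [c]; omega)
      simpa using h3
    refine (infinite_range_of_injective hinj).mono ?_
    rintro _ ⟨m, rfl⟩
    refine ⟨⟨k, by omega, _, rfl⟩, rfl, small_empty.subset ?_⟩
    rintro g ⟨hg, hgn⟩
    refine hgn fun i hi => ?_
    have hi' : (i : ℕ) + (k + 1) < N := hi
    rw [hg i (by omega), Function.update_of_ne]
    intro hic
    have : (i : ℕ) = N - (k + 1) := congrArg Fin.val hic
    omega
  · rintro _ ⟨k, hk, e, rfl⟩ hk0
    have hk0 : k = 0 := hk0
    subst hk0
    exact ⟨e, cyl_zero e⟩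
  · intro e
    exact ⟨0, Nat.zero_le _, e, by rw [cyl_zero]⟩
  · refine ⟨N, le_rfl, 0, ?_⟩
    congr 1
    ext f
    simp only [mem_univ, true_iff]
    intro i hi
    omega
  · rintro _ ⟨k, hk, e, rfl⟩
    exact hk

theorem initial_countable (N : ℕ) : (initial N).Countable := by
  have : initial N ⊆ range fun q : ℕ × (Fin N → ℕ) => ((q.1, cyl q.1 q.2) : Pt (Fin N → ℕ)) := by
    rintro _ ⟨k, -, e, rfl⟩
    exact ⟨(k, e), rfl⟩
  exact (countable_range _).mono this

/-! ### The space of a saturated family -/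

namespace Good

variable {N : ℕ} {G : Set (Pt E)}

/-- The clopen set attached to `y`: the points that contain the set `y` modulo their ideal. -/
def hat (y : G) : Set G := {x | Small G x.1.1 (x.1.2 \ y.1.2)}

/-- The topology on `G` in which the sets `hat x` minus finitely many `hat w` with `w` of rank below
`x` form a neighbourhood base at `x`. -/
abbrev space (G : Set (Pt E)) : TopologicalSpace G where
  IsOpen U := ∀ x ∈ U, ∃ W : Set G, W.Finite ∧ (∀ w ∈ W, w.1.1 < x.1.1) ∧
    hat x \ ⋃ w ∈ W, hat w ⊆ U
  isOpen_univ := fun x _ => ⟨∅, finite_empty, by simp, subset_univ _⟩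
  isOpen_inter := by
    rintro U V hU hV x ⟨hxU, hxV⟩
    obtain ⟨W, hW, hWx, hWU⟩ := hU x hxU
    obtain ⟨W', hW', hWx', hWV⟩ := hV x hxV
    refine ⟨W ∪ W', hW.union hW', ?_, ?_⟩
    · rintro w (hw | hw)
      exacts [hWx w hw, hWx' w hw]
    · rw [biUnion_union]
      exact fun u hu => ⟨hWU ⟨hu.1, fun h => hu.2 (Or.inl h)⟩, hWV ⟨hu.1, fun h => hu.2 (Or.inr h)⟩⟩
  isOpen_sUnion := by
    rintro C hC x ⟨U, hU, hxU⟩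
    obtain ⟨W, hW, hWx, hWU⟩ := hC U hU x hxU
    exact ⟨W, hW, hWx, hWU.trans (subset_sUnion_of_mem hU)⟩

theorem self_mem_hat (y : G) : y ∈ hat y := by
  have : Small G y.1.1 (y.1.2 \ y.1.2) := by simpa using small_empty
  exact this

theorem hat_lt (h : Good N G) {x y : G} (hxy : x ∈ hat y) (hne : x ≠ y) : x.1.1 < y.1.1 :=
  h.lt_of_in x.2 y.2 hxy fun e => hne (Subtype.ext e)

/-- If `S` contains the set `x` modulo the ideal of `x`, then some basic neighbourhood of `x`
consists of points almost contained in `S`. -/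
theorem exists_nhd (h : Good N G) {x : G} {S : Set E} (hS : Small G x.1.1 (x.1.2 \ S)) :
    ∃ W : Set G, W.Finite ∧ (∀ w ∈ W, w.1.1 < x.1.1) ∧
      ∀ u ∈ hat x \ ⋃ w ∈ W, hat w, ¬ Small G u.1.1 (u.1.2 ∩ S) := by
  obtain ⟨t, ht, htG, htx, hcov⟩ := hS
  refine ⟨(fun u : G => (u : Pt E)) ⁻¹' t, ht.preimage Subtype.val_injective.injOn,
    fun w hw => htx _ hw, ?_⟩
  rintro u ⟨hux, hun⟩ hsm
  have h1 : Small G u.1.1 (⋃ y ∈ t, u.1.2 ∩ y.2) := by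
    refine small_biUnion ht fun y hy => ?_
    refine (h.meas u.2 (htG hy)).resolve_right fun hy' => hun ?_
    exact mem_iUnion₂.2 ⟨⟨y, htG hy⟩, hy, hy'⟩
  refine h.proper u.1 u.2 (((Small.union hux hsm).union h1).subset fun e he => ?_)
  by_cases hex : e ∈ x.1.2
  · by_cases heS : e ∈ S
    · exact Or.inl (Or.inr ⟨he, heS⟩)
    · obtain ⟨y, hy, hey⟩ := mem_iUnion₂.1 (hcov ⟨hex, heS⟩)
      exact Or.inr (mem_iUnion₂.2 ⟨y, hy, he, hey⟩)
  · exact Or.inl (Or.inl ⟨he, hex⟩)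

theorem isClopen_hat (h : Good N G) (z : G) : @IsClopen G (space G) (hat z) := by
  let := space G
  constructor
  · constructor
    intro x hx
    have hS : Small G x.1.1 (x.1.2 \ z.1.2ᶜ) := by
      rw [sdiff_compl]
      exact (h.meas x.2 z.2).resolve_right hx
    obtain ⟨W, hW, hWx, hWu⟩ := h.exists_nhd hS
    exact ⟨W, hW, hWx, fun u hu hz => hWu u hu (by rw [← sdiff_eq]; exact hz)⟩
  · intro x hx
    obtain ⟨W, hW, hWx, hWu⟩ := h.exists_nhd (x := x) (S := z.1.2) hx
    exact ⟨W, hW, hWx, fun u hu => (h.meas u.2 z.2).resolve_left (hWu u hu)⟩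

theorem t2 (h : Good N G) : @T2Space G (space G) := by
  let := space G
  have key : ∀ x y : G, x ≠ y → x.1.1 ≤ y.1.1 →
      ∃ u v : Set G, IsOpen u ∧ IsOpen v ∧ x ∈ u ∧ y ∈ v ∧ Disjoint u v := by
    intro x y hne hle
    have hx := h.isClopen_hat x
    refine ⟨hat x, (hat x)ᶜ, hx.isOpen, hx.compl.isOpen, self_mem_hat x, fun hy => ?_,
      disjoint_compl_right⟩
    have := h.hat_lt hy hne.symm
    omega
  refine ⟨fun x y hne => ?_⟩
  rcases le_total x.1.1 y.1.1 with hle | hle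
  · exact key x y hne hle
  · obtain ⟨u, v, hu, hv, hyu, hxv, hd⟩ := key y x hne.symm hle
    exact ⟨v, u, hv, hu, hxv, hyu, hd.symm⟩

/-- An ultrafilter converges to the point `y` of least rank such that `hat y` belongs to it. -/
theorem compact (h : Good N G) : @CompactSpace G (space G) := by
  let := space G
  refine ⟨isCompact_iff_ultrafilter_le_nhds.2 fun f _ => ?_⟩
  let T : Set G := {y | hat y ∈ f}
  have hT : T.Nonempty := by
    refine ⟨⟨_, h.top⟩, ?_⟩
    have : hat (⟨_, h.top⟩ : G) = univ := by
      ext x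
      simp only [hat, mem_ofPred_eq, mem_univ, iff_true]
      exact small_empty.subset (by simp)
    change hat _ ∈ f
    rw [this]
    exact univ_mem
  obtain ⟨y, hyT, hmin⟩ := exists_minimalFor_of_wellFoundedLT (· ∈ T) (fun y : G => y.1.1) hT
  refine ⟨y, mem_univ y, fun V hV => ?_⟩
  obtain ⟨U, hUV, hU, hyU⟩ := mem_nhds_iff.1 hV
  obtain ⟨W, hW, hWy, hWU⟩ := hU y hyU
  refine mem_of_superset ?_ (hWU.trans hUV)
  have hn : (⋃ w ∈ W, hat w) ∉ f := by
    rw [Ultrafilter.finite_biUnion_mem_iff hW]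
    rintro ⟨w, hw, hwf⟩
    have h1 : y.1.1 ≤ w.1.1 := hmin (j := w) hwf (hWy w hw).le
    have h2 := hWy w hw
    omega
  exact inter_mem hyT (Ultrafilter.compl_mem_iff_notMem.2 hn)

theorem dense_zero (h : Good N G) :
    @Dense G (space G) (range fun e : E => (⟨(0, {e}), h.sing e⟩ : G)) := by
  let := space G
  intro x
  rw [mem_closure_iff]
  intro U hU hxU
  obtain ⟨W, hW, hWx, hWU⟩ := hU x hxU
  have hsm : Small G x.1.1 (⋃ w ∈ W, w.1.2) :=
    small_biUnion hW fun w hw => small_of_mem w.2 (hWx w hw)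
  obtain ⟨e, hex, heW⟩ : ∃ e ∈ x.1.2, e ∉ ⋃ w ∈ W, w.1.2 := by
    by_contra! hcon
    exact h.proper x.1 x.2 (hsm.subset hcon)
  refine ⟨⟨(0, {e}), h.sing e⟩, hWU ⟨?_, ?_⟩, e, rfl⟩
  · refine small_empty.subset ?_
    rintro _ ⟨rfl, hn⟩
    exact hn hex
  · intro hmem
    obtain ⟨w, hw, hew⟩ := mem_iUnion₂.1 hmem
    refine h.not_both (h.sing e) hew (small_empty.subset ?_)
    rintro _ ⟨rfl, hew'⟩
    exact heW (mem_iUnion₂.2 ⟨w, hw, hew'⟩)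

theorem isSeqRank (h : Good N G)
    (hsat : ∀ k < N, ∀ s : ℕ → Pt E, Function.Injective s → (∀ i, s i ∈ G) →
      (∀ i, (s i).1 = k) → Hits G k s) :
    @IsSeqRank G (space G) N (fun x => x.1.1) := by
  let := space G
  refine ⟨fun x => h.le x.1 x.2, fun x => ⟨hat x, h.isClopen_hat x, self_mem_hat x,
    fun y hy hne => h.hat_lt hy hne⟩, fun k hk s hs hsk => ?_⟩
  obtain ⟨x, hx, hxk, hinf⟩ := hsat k hk (fun i => (s i : Pt E))
    (fun a b hab => hs (Subtype.ext hab)) (fun i => (s i).2) hsk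
  obtain ⟨φ, hφ, hφx⟩ := extraction_of_frequently_atTop (Nat.frequently_atTop_iff_infinite.2 hinf)
  have hmem : ∀ i, s (φ i) ∈ hat (⟨x, hx⟩ : G) := fun i => by
    have := hφx i
    rw [← hsk (φ i)] at this
    exact this
  refine ⟨⟨x, hx⟩, hxk, φ, hφ, fun V hV => ?_⟩
  obtain ⟨U, hUV, hU, hxU⟩ := mem_nhds_iff.1 hV
  obtain ⟨W, hW, hWx, hWU⟩ := hU _ hxU
  -- A set `hat w` with `w` of rank at most `k` contains at most one point of rank `k`, namely `w`.
  have hout : ∀ᶠ i in atTop, ∀ w ∈ W, s (φ i) ∉ hat w := by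
    refine hW.eventually_all.2 fun w hw => ?_
    have hne : ∀ᶠ i in atTop, s (φ i) ≠ w := by
      refine Nat.cofinite_eq_atTop ▸ ?_
      refine Set.Subsingleton.finite ?_
      intro a ha b hb
      simp only [mem_compl_iff, mem_ofPred_eq, not_not] at ha hb
      exact hφ.injective (hs (ha.trans hb.symm))
    refine hne.mono fun i hi hiw => ?_
    have h1 := h.hat_lt hiw hi
    have h2 := hWx w hw
    have h3 := hsk (φ i)
    simp only at h2 h3
    omega
  refine hout.mono fun i hi => hUV (hWU ⟨hmem i, ?_⟩)
  intro hmem'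
  obtain ⟨w, hw, hiw⟩ := mem_iUnion₂.1 hmem'
  exact hi w hw hiw

end Good

end SeqOrder

theorem statement16 (hCH : Cardinal.continuum = Cardinal.aleph 1) (n : ℕ) :
    ∃ (X : Type) (_ : TopologicalSpace X) (f : Ultrafilter ℕ → X),
      CompactSpace X ∧ T2Space X ∧ Topology.IsQuotientMap f ∧
      (∀ S : Set X, IsSeqClosed S → IsClosed S) ∧
      (∀ M : Set X, closure M = seqClosure^[n + 1] M) ∧
      (∃ M : Set X, seqClosure^[n] M ≠ closure M) := by
  let E := Fin (n + 1) → ℕ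
  -- The hypothesis lives in an arbitrary universe; it is transferred to the lowest one.
  have hCH₀ : Cardinal.continuum.{0} = Cardinal.aleph 1 := by
    apply Cardinal.lift_injective
    simpa using hCH
  -- Sequences are enumerated along the initial ordinal of the continuum, which is `ω₁` under CH.
  let ι := (Cardinal.continuum.{0}).ord.ToType
  have hmk : Cardinal.mk ι = Cardinal.continuum := by simp [ι]
  have hseg : ∀ a : ι, (Set.Iio a).Countable := by
    intro a
    rw [← Cardinal.le_aleph0_iff_set_countable, ← Order.lt_succ_iff, Cardinal.succ_aleph0, ← hCH₀]
    exact (Cardinal.mk_Iio_lt a (by simp [ι])).trans_eq hmk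
  have hunc : ¬ (Set.univ : Set ι).Countable := by
    rw [← Cardinal.le_aleph0_iff_set_countable, Cardinal.mk_univ, hmk, not_le]
    exact Cardinal.aleph0_lt_continuum
  have hseq : Cardinal.mk (ℕ → SeqOrder.Pt E) = Cardinal.continuum := by
    simp [SeqOrder.Pt]
  obtain ⟨σ⟩ := Cardinal.eq.1 (hmk.trans hseq.symm)
  obtain ⟨G, hG, hsat⟩ := SeqOrder.exists_saturated hseg hunc σ.surjective
    (SeqOrder.initial_good (n + 1)) (SeqOrder.initial_countable (n + 1))
  let := SeqOrder.Good.space G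
  have : CompactSpace G := hG.compact
  have : T2Space G := hG.t2
  have hrank := hG.isSeqRank hsat
  have hdense := hG.dense_zero
  obtain ⟨d⟩ := nonempty_denumerable E
  let g : ℕ → G := fun m => ⟨(0, {(Denumerable.eqv E).symm m}), hG.sing _⟩
  have hg : DenseRange g := hdense.mono (by
    rintro _ ⟨e, rfl⟩
    exact ⟨Denumerable.eqv E e, by simp [g]⟩)
  have hcont : Continuous (Ultrafilter.extend g) := continuous_ultrafilter_extend g
  have hsurj : Function.Surjective (Ultrafilter.extend g) := by
    have hdr : DenseRange (Ultrafilter.extend g) := hg.mono (by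
      rintro _ ⟨m, rfl⟩
      exact ⟨pure m, congrFun (ultrafilter_extend_extends g) m⟩)
    rw [← Set.range_eq_univ, ← hcont.isClosedMap.isClosed_range.closure_eq]
    exact hdr.closure_range
  have hd0 : Dense {x : G | x.1.1 = 0} := hdense.mono (by
    rintro _ ⟨e, rfl⟩
    rfl)
  exact ⟨G, inferInstance, Ultrafilter.extend g, inferInstance, inferInstance,
    hcont.isClosedMap.isQuotientMap hcont hsurj, fun S hS => hrank.isClosed_of_isSeqClosed hS,
    hrank.closure_eq, _, hrank.iterate_ne hd0 (x := ⟨_, hG.top⟩) rfl⟩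
end

section
/- There exists (in ZFC, without extra set-theoretic assumptions) a compact Hausdorff topological space X such that for every subset S of X the closure of S equals seqClosure (seqClosure S), and there exists a subset S₀ of X with seqClosure S₀ ≠ closure S₀; that is, a compact Hausdorff sequential space of sequential order exactly 2 exists. -/
/-!
The space is the one-point compactification `Ψ ∪ {∞}` of the Mrówka space `Ψ` of an infinite
maximal almost disjoint (MAD) family `A` of subsets of an infinite set `D`. Such a family comes from
Zorn's lemma, applied above the columns of `ℕ × ℕ`. The points of `D` are isolated in `Ψ`, and a
neighbourhood of `a ∈ A` contains `a` and all but finitely many elements of the set `a`. Almost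
disjointness makes the sets `{a} ∪ a` clopen, and they are compact, so `Ψ` is Hausdorff and locally
compact.

A point of `Ψ` in the closure of `S` is a limit of a sequence in `S`. If `∞ ∈ closure S \ S`, then
infinitely many `a ∈ A` lie in `seqClosure S` (`infinite_of_infty_mem_closure`): otherwise, by
maximality, `S` is contained in finitely many sets `{a} ∪ a` together with finitely many points of
`D`, which is a compact set. Any injective sequence in `A` converges to `∞`, since `A` is closed and
discrete in `Ψ`. So two steps always suffice. One step is not enough for `S = D`: a sequence in `D`
that tends to `∞` has infinite range, hence by maximality has infinitely many terms in some `a ∈ A`,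
and so infinitely many terms in the compact set `{a} ∪ a`.
-/

open Set Filter Topology OnePoint

/-- `A` is a maximal almost disjoint family of infinite subsets of `D`. Maximality is expressed
by saying that every infinite set has infinite intersection with a member of `A`. -/
structure IsMAD_s17 {D : Type} (A : Set (Set D)) : Prop where
  inf : ∀ a ∈ A, a.Infinite
  ad : ∀ a ∈ A, ∀ b ∈ A, a ≠ b → (a ∩ b).Finite
  max : ∀ T : Set D, T.Infinite → ∃ a ∈ A, (a ∩ T).Infinite

theorem exists_infinite_mad : ∃ A : Set (Set (ℕ × ℕ)), A.Infinite ∧ IsMAD_s17 A := by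
  let c : ℕ → Set (ℕ × ℕ) := fun n => range fun m => (n, m)
  have hc : Function.Injective c := by
    intro m n h
    have : (m, 0) ∈ c n := h ▸ ⟨0, rfl⟩
    obtain ⟨k, hk⟩ := this
    exact (congrArg Prod.fst hk).symm
  obtain ⟨M, hcM, hM⟩ := zorn_subset_nonempty
    {A : Set (Set (ℕ × ℕ)) | (∀ a ∈ A, a.Infinite) ∧
      ∀ a ∈ A, ∀ b ∈ A, a ≠ b → (a ∩ b).Finite}
    (by
      intro C hC hchain _
      refine ⟨⋃₀ C, ⟨?_, ?_⟩, fun s hs => subset_sUnion_of_mem hs⟩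
      · rintro a ⟨s, hs, has⟩
        exact (hC hs).1 a has
      · rintro a ⟨s, hs, has⟩ b ⟨t, ht, hbt⟩ hab
        rcases hchain.total hs ht with h | h
        · exact (hC ht).2 a (h has) b hbt hab
        · exact (hC hs).2 a has b (h hbt) hab)
    (range c)
    (by
      constructor
      · rintro _ ⟨n, rfl⟩
        exact infinite_range_of_injective fun x y h => congrArg Prod.snd h
      · rintro _ ⟨m, rfl⟩ _ ⟨n, rfl⟩ hmn
        convert finite_empty
        ext p
        simp only [mem_inter_iff, mem_empty_iff_false, iff_false, not_and]
        rintro ⟨x, rfl⟩ ⟨y, hy⟩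
        exact hmn (congrArg c (congrArg Prod.fst hy).symm))
  refine ⟨M, (infinite_range_of_injective hc).mono hcM, hM.prop.1, hM.prop.2, ?_⟩
  intro T hT
  by_contra! h
  have hins : insert T M ⊆ M := by
    refine hM.le_of_ge (y := insert T M) ⟨?_, ?_⟩ (subset_insert T M)
    · rintro a (rfl | ha)
      · exact hT
      · exact hM.prop.1 a ha
    · rintro a (rfl | ha) b (rfl | hb) hab
      · exact absurd rfl hab
      · rw [inter_comm]
        exact h b hb
      · exact h a ha
      · exact hM.prop.2 a ha b hb hab
  exact hT (inter_self T ▸ h T (hins (mem_insert T M)))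

/-- The Mrówka space of a family `A` of subsets of `D`: the disjoint union of `D` and `A`. -/
def Psi {D : Type} (A : Set (Set D)) : Type := D ⊕ A

namespace Psi

variable {D : Type} {A : Set (Set D)}

/-- An element of `D` as a point of `Psi A`. -/
def pt (d : D) : Psi A := Sum.inl d

/-- A member of `A` as a point of `Psi A`. -/
def lim (a : A) : Psi A := Sum.inr a

theorem pt_injective : Function.Injective (pt : D → Psi A) := Sum.inl_injective

theorem lim_injective : Function.Injective (lim : A → Psi A) := Sum.inr_injective

theorem lim_ne_pt (a : A) (d : D) : lim a ≠ pt d := Sum.inr_ne_inl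

theorem cases_pt_lim (x : Psi A) : (∃ d, x = pt d) ∨ ∃ a, x = lim a := by
  rcases x with d | a
  · exact Or.inl ⟨d, rfl⟩
  · exact Or.inr ⟨a, rfl⟩

/-- A set is open when, with each `a ∈ A` it contains, it contains all but finitely many elements
of `a`. -/
instance : TopologicalSpace (Psi A) where
  IsOpen U := ∀ a : A, lim a ∈ U → {d ∈ a.1 | pt d ∉ U}.Finite
  isOpen_univ := by simp
  isOpen_inter U V hU hV a ha := by
    refine ((hU a ha.1).union (hV a ha.2)).subset ?_
    rintro d ⟨hd, h⟩
    by_cases hdU : pt d ∈ U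
    · exact Or.inr ⟨hd, fun hdV => h ⟨hdU, hdV⟩⟩
    · exact Or.inl ⟨hd, hdU⟩
  isOpen_sUnion C hC := by
    rintro a ⟨U, hU, ha⟩
    exact (hC U hU a ha).subset fun d hd => ⟨hd.1, fun h => hd.2 ⟨U, hU, h⟩⟩

theorem isOpen_def {U : Set (Psi A)} :
    IsOpen U ↔ ∀ a : A, lim a ∈ U → {d ∈ a.1 | pt d ∉ U}.Finite := Iff.rfl

theorem isOpen_pt_image (T : Set D) : IsOpen (pt '' T : Set (Psi A)) := by
  rintro a ⟨d, -, h⟩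
  exact absurd h.symm (lim_ne_pt a d)

theorem isOpen_insert_range_pt (x : Psi A) : IsOpen (insert x (range pt)) := by
  intro a _
  convert finite_empty
  ext d
  simp

theorem isClosed_pt_singleton (d : D) : IsClosed ({pt d} : Set (Psi A)) := by
  rw [← isOpen_compl_iff]
  intro a _
  refine (finite_singleton d).subset ?_
  rintro e ⟨-, h⟩
  exact pt_injective (not_not.mp h)

/-- The basic neighbourhood `{a} ∪ a` of the point `a`. -/
def nbd (a : A) : Set (Psi A) := insert (lim a) (pt '' a.1)

theorem isOpen_nbd (a : A) : IsOpen (nbd a) := by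
  rintro b (h | ⟨d, -, h⟩)
  · obtain rfl := lim_injective h
    convert finite_empty
    ext d
    simp only [mem_ofPred_eq, mem_empty_iff_false, iff_false, not_and, not_not]
    exact fun hd => Or.inr ⟨d, hd, rfl⟩
  · exact absurd h.symm (lim_ne_pt b d)

theorem pt_mem_nbd {a : A} {d : D} : pt d ∈ nbd a ↔ d ∈ a.1 := by
  constructor
  · rintro (h | ⟨e, he, h⟩)
    · exact absurd h.symm (lim_ne_pt a d)
    · exact pt_injective h ▸ he
  · exact fun h => Or.inr ⟨d, h, rfl⟩

theorem lim_mem_nbd {a b : A} : lim b ∈ nbd a ↔ b = a := by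
  constructor
  · rintro (h | ⟨e, he, h⟩)
    · exact lim_injective h
    · exact absurd h.symm (lim_ne_pt b e)
  · rintro rfl
    exact mem_insert _ _

theorem isClosed_nbd (hA : IsMAD_s17 A) (a : A) : IsClosed (nbd a) := by
  rw [← isOpen_compl_iff]
  intro b hb
  have hba : b ≠ a := fun h => hb (lim_mem_nbd.2 h)
  refine (hA.ad b b.2 a a.2 fun h => hba (Subtype.ext h)).subset ?_
  rintro d ⟨hd, h⟩
  exact ⟨hd, pt_mem_nbd.1 (not_not.mp h)⟩

theorem tendsto_pt {ι : Type} (a : A) (f : ι → D) (hf : Function.Injective f)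
    (hfa : ∀ i, f i ∈ a.1) : Tendsto (fun i => (pt (f i) : Psi A)) cofinite (𝓝 (lim a)) := by
  rw [tendsto_nhds]
  intro U hU ha
  exact ((isOpen_def.1 hU a ha).preimage hf.injOn).subset fun i hi => ⟨hfa i, hi⟩

theorem isCompact_nbd (a : A) : IsCompact (nbd a) := by
  have := (tendsto_pt a (fun d : a.1 => d.1) Subtype.val_injective
    fun d => d.2).isCompact_insert_range_of_cofinite
  convert this using 1
  rw [nbd, image_eq_range]

theorem t2Space (hA : IsMAD_s17 A) : T2Space (Psi A) := by
  have clopen_sep : ∀ (x y : Psi A) (U : Set (Psi A)), IsOpen U → IsClosed U → x ∈ U → y ∉ U →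
      SeparatedNhds ({x} : Set (Psi A)) {y} := fun x y U ho hc hx hy =>
    ⟨U, Uᶜ, ho, hc.isOpen_compl, by simpa, by simpa, disjoint_compl_right⟩
  have open_pt : ∀ d : D, IsOpen ({pt d} : Set (Psi A)) := fun d => by
    simpa using isOpen_pt_image (A := A) {d}
  refine ⟨fun x y hxy => ?_⟩
  suffices h : SeparatedNhds ({x} : Set (Psi A)) {y} by
    obtain ⟨U, V, hU, hV, hx, hy, hd⟩ := h
    exact ⟨U, V, hU, hV, hx rfl, hy rfl, hd⟩
  rcases cases_pt_lim x with ⟨d, rfl⟩ | ⟨a, rfl⟩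
  · exact clopen_sep _ _ {pt d} (open_pt d) (isClosed_pt_singleton d) rfl hxy.symm
  rcases cases_pt_lim y with ⟨d, rfl⟩ | ⟨b, rfl⟩
  · exact (clopen_sep _ _ {pt d} (open_pt d) (isClosed_pt_singleton d) rfl hxy).symm
  · refine clopen_sep _ _ (nbd a) (isOpen_nbd a) (isClosed_nbd hA a) (lim_mem_nbd.2 rfl) ?_
    exact fun h => hxy (congrArg lim (lim_mem_nbd.1 h).symm)

theorem weaklyLocallyCompactSpace : WeaklyLocallyCompactSpace (Psi A) := by
  refine ⟨fun x => ?_⟩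
  rcases cases_pt_lim x with ⟨d, rfl⟩ | ⟨a, rfl⟩
  · refine ⟨{pt d}, isCompact_singleton, IsOpen.mem_nhds ?_ rfl⟩
    simpa using isOpen_pt_image (A := A) {d}
  · exact ⟨nbd a, isCompact_nbd a, (isOpen_nbd a).mem_nhds (lim_mem_nbd.2 rfl)⟩

/-- `A` is closed and discrete in `Psi A`, so it meets a compact set in a finite set. -/
theorem finite_lim_preimage {K : Set (Psi A)} (hK : IsCompact K) : (lim ⁻¹' K).Finite := by
  obtain ⟨t, -, ht⟩ := hK.elim_nhds_subcover (fun x => insert x (range pt))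
    fun x _ => (isOpen_insert_range_pt x).mem_nhds (mem_insert _ _)
  refine (t.finite_toSet.preimage lim_injective.injOn).subset fun a ha => ?_
  obtain ⟨x, hx, h⟩ := mem_iUnion₂.1 (ht ha)
  rcases h with h | ⟨d, h⟩
  · obtain rfl : lim a = x := h
    exact hx
  · exact absurd h.symm (lim_ne_pt a d)

/-- An injective sequence in `A` converges to `∞`. -/
theorem infty_mem_seqClosure {S : Set (OnePoint (Psi A))}
    (h : {a : A | ((lim a : Psi A) : OnePoint (Psi A)) ∈ S}.Infinite) : ∞ ∈ seqClosure S := by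
  refine ⟨fun n => ((lim (h.natEmbedding _ n).1 : Psi A) : OnePoint (Psi A)),
    fun n => (h.natEmbedding _ n).2, ?_⟩
  refine tendsto_coe_infty.comp ?_
  have hinj : Function.Injective fun n => (h.natEmbedding _ n).1 :=
    Subtype.val_injective.comp (h.natEmbedding _).injective
  refine Tendsto.comp ?_ (Nat.cofinite_eq_atTop ▸ hinj.tendsto_cofinite)
  intro s hs
  exact (finite_lim_preimage (mem_coclosedCompact_iff.1 hs)).subset fun a ha => subset_closure ha

theorem lim_mem_seqClosure {S : Set (OnePoint (Psi A))} {a : A}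
    (h : {d ∈ a.1 | ((pt d : Psi A) : OnePoint (Psi A)) ∈ S}.Infinite) :
    ((lim a : Psi A) : OnePoint (Psi A)) ∈ seqClosure S := by
  refine ⟨fun n => ((pt (h.natEmbedding _ n).1 : Psi A) : OnePoint (Psi A)),
    fun n => (h.natEmbedding _ n).2.2, ?_⟩
  refine (continuous_coe.tendsto _).comp ?_
  rw [← Nat.cofinite_eq_atTop]
  exact tendsto_pt a _ (Subtype.val_injective.comp (h.natEmbedding _).injective)
    fun n => (h.natEmbedding _ n).2.1

/-- Sequences in `S` reach every point of `Psi A` in the closure of `S`. -/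
theorem coe_mem_seqClosure {S : Set (OnePoint (Psi A))} {x : Psi A}
    (hx : (x : OnePoint (Psi A)) ∈ closure S) : (x : OnePoint (Psi A)) ∈ seqClosure S := by
  rw [mem_closure_iff] at hx
  rcases cases_pt_lim x with ⟨d, rfl⟩ | ⟨a, rfl⟩
  · apply subset_seqClosure
    obtain ⟨y, ⟨z, ⟨e, rfl, rfl⟩, rfl⟩, hy⟩ :=
      hx _ (isOpen_image_coe.2 (isOpen_pt_image {d})) ⟨_, ⟨d, rfl, rfl⟩, rfl⟩
    exact hy
  · by_cases haS : ((lim a : Psi A) : OnePoint (Psi A)) ∈ S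
    · exact subset_seqClosure haS
    apply lim_mem_seqClosure
    intro hfin
    -- If only finitely many elements of `a` lie in `S`, deleting them from the basic
    -- neighbourhood of `a` gives a neighbourhood that misses `S`.
    have hU : IsOpen (nbd a \ pt '' {d ∈ a.1 | ((pt d : Psi A) : OnePoint (Psi A)) ∈ S}) := by
      refine (isOpen_nbd a).sdiff ?_
      rw [image_eq_iUnion]
      exact hfin.isClosed_biUnion fun d _ => isClosed_pt_singleton d
    obtain ⟨y, ⟨z, ⟨hz, hzT⟩, rfl⟩, hy⟩ := hx _ (isOpen_image_coe.2 hU)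
      ⟨lim a, ⟨lim_mem_nbd.2 rfl, by rintro ⟨d, -, h⟩; exact lim_ne_pt a d h.symm⟩, rfl⟩
    rcases hz with rfl | ⟨d, hd, rfl⟩
    · exact haS hy
    · exact hzT ⟨d, ⟨hd, hy⟩, rfl⟩

theorem infinite_of_infty_mem_closure (hA : IsMAD_s17 A) {S : Set (OnePoint (Psi A))}
    (hx : ∞ ∈ closure S) (hS : ∞ ∉ S) :
    {a : A | ((lim a : Psi A) : OnePoint (Psi A)) ∈ seqClosure S}.Infinite := by
  have := t2Space hA
  intro hF
  set F := {a : A | ((lim a : Psi A) : OnePoint (Psi A)) ∈ seqClosure S} with hFdef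
  let T : Set D := {d | ((pt d : Psi A) : OnePoint (Psi A)) ∈ S ∧ ∀ a ∈ F, d ∉ a.1}
  have hT : T.Finite := by
    by_contra hT
    obtain ⟨a, ha, hinf⟩ := hA.max T hT
    have haF : (⟨a, ha⟩ : A) ∈ F :=
      lim_mem_seqClosure (hinf.mono fun d hd => ⟨hd.1, hd.2.1⟩)
    obtain ⟨d, hd⟩ := hinf.nonempty
    exact hd.2.2 _ haF hd.1
  let K : Set (Psi A) := (⋃ a ∈ F, nbd a) ∪ pt '' T
  have hK : IsCompact K :=
    (hF.isCompact_biUnion fun a _ => isCompact_nbd a).union (hT.image _).isCompact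
  obtain ⟨y, hyK, hyS⟩ := mem_closure_iff.1 hx (((↑) : Psi A → OnePoint (Psi A)) '' K)ᶜ
    (isOpen_compl_image_coe.2 ⟨hK.isClosed, hK⟩) infty_notMem_image_coe
  induction y using OnePoint.rec with
  | infty => exact hS hyS
  | coe x =>
    refine hyK ⟨x, ?_, rfl⟩
    rcases cases_pt_lim x with ⟨d, rfl⟩ | ⟨a, rfl⟩
    · by_cases h : ∀ a ∈ F, d ∉ a.1
      · exact Or.inr ⟨d, ⟨hyS, h⟩, rfl⟩
      · push Not at h
        obtain ⟨a, haF, hd⟩ := h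
        exact Or.inl (mem_biUnion haF (pt_mem_nbd.2 hd))
    · exact Or.inl (mem_biUnion (show a ∈ F from subset_seqClosure hyS) (lim_mem_nbd.2 rfl))

theorem closure_subset_seqClosure_seqClosure (hA : IsMAD_s17 A) (S : Set (OnePoint (Psi A))) :
    closure S ⊆ seqClosure (seqClosure S) := by
  intro x hx
  induction x using OnePoint.rec with
  | infty =>
    by_cases hS : ∞ ∈ S
    · exact subset_seqClosure (subset_seqClosure hS)
    · exact infty_mem_seqClosure (infinite_of_infty_mem_closure hA hx hS)
  | coe x => exact subset_seqClosure (coe_mem_seqClosure hx)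

theorem seqClosure_seqClosure_subset_closure {X : Type} [TopologicalSpace X] (S : Set X) :
    seqClosure (seqClosure S) ⊆ closure S :=
  seqClosure_subset_closure.trans (closure_minimal seqClosure_subset_closure isClosed_closure)

theorem infty_mem_closure_range_pt (hA : IsMAD_s17 A) (hinf : A.Infinite) :
    ∞ ∈ closure (range fun d : D => ((pt d : Psi A) : OnePoint (Psi A))) := by
  have : Infinite A := hinf.to_subtype
  refine seqClosure_seqClosure_subset_closure _ (infty_mem_seqClosure ?_)
  refine infinite_univ.mono fun a _ => lim_mem_seqClosure ?_
  exact (hA.inf a a.2).mono fun d hd => ⟨hd, d, rfl⟩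

theorem infty_notMem_seqClosure_range_pt (hA : IsMAD_s17 A) :
    ∞ ∉ seqClosure (range fun d : D => ((pt d : Psi A) : OnePoint (Psi A))) := by
  have := t2Space hA
  rintro ⟨x, hx, hlim⟩
  choose d hd using hx
  have key : ∀ K : Set (Psi A), IsCompact K → {n | (pt (d n) : Psi A) ∈ K}.Finite := by
    intro K hK
    have h := hlim.eventually_mem
      ((isOpen_compl_image_coe.2 ⟨hK.isClosed, hK⟩).mem_nhds infty_notMem_image_coe)
    rw [← Nat.cofinite_eq_atTop] at h
    refine Finite.subset h fun n hn hc => hc ?_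
    exact ⟨_, hn, hd n⟩
  have hrange : (range d).Infinite := by
    intro hfin
    refine infinite_univ ((key _ (hfin.image pt).isCompact).subset fun n _ => ?_)
    exact ⟨_, ⟨n, rfl⟩, rfl⟩
  obtain ⟨a, ha, h⟩ := hA.max _ hrange
  refine h (((key _ (isCompact_nbd ⟨a, ha⟩)).image d).subset ?_)
  rintro _ ⟨hna, n, rfl⟩
  exact ⟨n, pt_mem_nbd.2 hna, rfl⟩

end Psi

/-!
In ZFC (no extra set-theoretic assumptions): there exists a compact Hausdorff
space `X` such that the closure of every subset `S` equals
`seqClosure (seqClosure S)`, while some subset `S₀` has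
`seqClosure S₀ ≠ closure S₀`; i.e. a compact Hausdorff sequential space of
sequential order exactly 2 exists.
-/
theorem statement17 :
    ∃ (X : Type) (_ : TopologicalSpace X),
      CompactSpace X ∧ T2Space X ∧
      (∀ S : Set X, closure S = seqClosure (seqClosure S)) ∧
      (∃ S₀ : Set X, seqClosure S₀ ≠ closure S₀) := by
  obtain ⟨A, hinf, hA⟩ := exists_infinite_mad
  have := Psi.t2Space hA
  have := Psi.weaklyLocallyCompactSpace (A := A)
  refine ⟨OnePoint (Psi A), inferInstance, inferInstance, inferInstance, fun S => ?_,
    range fun d => ((Psi.pt d : Psi A) : OnePoint (Psi A)), fun h => ?_⟩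
  · exact (Psi.closure_subset_seqClosure_seqClosure hA S).antisymm
      (Psi.seqClosure_seqClosure_subset_closure S)
  · exact Psi.infty_notMem_seqClosure_range_pt hA (h ▸ Psi.infty_mem_closure_range_pt hA hinf)
end
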